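/- arXiv:1806.08885 — 5 statements merged into one kernel-verified Lean document; each statement's English description precedes it below -/
import Mathlib

section
/- For every integer r ≥ 2 there exists an integer N such that for every integer n ≥ N, the r-colour size-Ramsey number of the path on n vertices satisfies R̂(P_n, r) < 600 (log r) r² n. -/
open SimpleGraph

/-- `G → (F)_r` : every colouring of the edges of `G` with `r` colours yields a
monochromatic copy of `F`, i.e. an injective map preserving adjacency all of whose
edges receive the same colour. -/
def Arrows {V W : Type*} (G : SimpleGraph V) (F : SimpleGraph W) (r : ℕ) : Prop :=
  ∀ c : Sym2 V → Fin r, ∃ (k : Fin r) (f : W → V), Function.Injective f ∧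
    ∀ a b, F.Adj a b → G.Adj (f a) (f b) ∧ c s(f a, f b) = k

/-- The `r`-colour size-Ramsey number of `F`: the smallest number of edges of a
(finite) graph `G` satisfying `G → (F)_r`. -/
noncomputable def sizeRamsey {W : Type*} (F : SimpleGraph W) (r : ℕ) : ℕ :=
  sInf {m | ∃ (N : ℕ) (G : SimpleGraph (Fin N)), G.edgeSet.ncard = m ∧ Arrows G F r}

open Finset

/-- A random sequence of `m` points hits none of the sets of a small family of small sets
`s` times or more: the union bound with the exponential moment `2 ^ #hits`. -/
theorem exists_seq_card_hits_lt {α ι : Type*} [Fintype α] [DecidableEq α]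
    (I : Finset ι) (B : ι → Finset α) (b m s : ℕ) (hB : ∀ j ∈ I, #(B j) ≤ b)
    (h : #I * (Fintype.card α + b) ^ m < 2 ^ s * Fintype.card α ^ m) :
    ∃ f : Fin m → α, ∀ j ∈ I, #{i | f i ∈ B j} < s := by
  by_contra! hcon
  refine absurd h (not_lt.mpr ?_)
  calc 2 ^ s * Fintype.card α ^ m = ∑ _f : Fin m → α, 2 ^ s := by
        simp [mul_comm]
    _ ≤ ∑ f : Fin m → α, ∑ j ∈ I, 2 ^ #{i | f i ∈ B j} := by
        refine sum_le_sum fun f _ => ?_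
        obtain ⟨j, hj, hs⟩ := hcon f
        exact (Nat.pow_le_pow_right two_pos hs).trans
          (single_le_sum (f := fun j => 2 ^ #{i | f i ∈ B j}) (fun _ _ => Nat.zero_le _) hj)
    _ = ∑ j ∈ I, ∑ f : Fin m → α, ∏ i, (1 + if f i ∈ B j then 1 else 0) := by
        rw [sum_comm]
        refine sum_congr rfl fun j _ => sum_congr rfl fun f _ => ?_
        rw [← prod_const, prod_filter]
        refine prod_congr rfl fun i _ => ?_
        split_ifs <;> rfl
    _ = ∑ j ∈ I, (Fintype.card α + #(B j)) ^ m := by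
        refine sum_congr rfl fun j _ => ?_
        have := (Fintype.sum_pow (fun x : α => 1 + if x ∈ B j then 1 else 0) m).symm
        simpa [sum_add_distrib] using this
    _ ≤ ∑ _j ∈ I, (Fintype.card α + b) ^ m :=
        sum_le_sum fun j hj => Nat.pow_le_pow_left (by have := hB j hj; omega) m
    _ = #I * (Fintype.card α + b) ^ m := by simp

/-- The relation `R` contains no path on `n` vertices. -/
def PathFree {V : Type*} (R : V → V → Prop) (n : ℕ) : Prop :=
  ∀ l : List V, l.Nodup → l.IsChain R → l.length ≠ n

/-- Depth-first search: if `R` has no path on `n` vertices, then every large enough `U` contains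
a set `S` of prescribed size whose neighbours in `U` lie in `S` or in a set `P` of fewer than
`n` vertices. -/
theorem PathFree.exists_separated {V : Type*} [DecidableEq V] {R : V → V → Prop} {n : ℕ}
    (hR : PathFree R n) (hsymm : ∀ ⦃a b⦄, R a b → R b a) (hn : 0 < n)
    (U : Finset V) {k : ℕ} (hk : k ≤ #U) :
    ∃ S ⊆ U, #S = k ∧ ∃ P : Finset V, #P < n ∧
      ∀ a ∈ S, ∀ b ∈ U, R a b → b ∈ S ∪ P := by
  suffices H : ∃ S ⊆ U, #S = k ∧ ∃ l : List V, l.length < n ∧ l.Nodup ∧ l.IsChain R ∧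
      (∀ x ∈ l, x ∈ U ∧ x ∉ S) ∧ ∀ a ∈ S, ∀ b ∈ U, R a b → b ∈ S ∨ b ∈ l by
    obtain ⟨S, hSU, hS, l, hl, -, -, -, h⟩ := H
    exact ⟨S, hSU, hS, l.toFinset, (List.toFinset_card_le l).trans_lt hl, by simpa using h⟩
  induction k with
  | zero => exact ⟨∅, by simp, rfl, [], by simpa using hn, by simp, by simp, by simp, by simp⟩
  | succ k ih =>
    by_contra hcon
    suffices H : ∀ b : ℕ, ∃ S ⊆ U, #S = k ∧ ∃ l : List V, b ≤ l.length ∧ l.length < n ∧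
        l.Nodup ∧ l.IsChain R ∧ (∀ x ∈ l, x ∈ U ∧ x ∉ S) ∧
        ∀ a ∈ S, ∀ b ∈ U, R a b → b ∈ S ∨ b ∈ l by
      obtain ⟨S, -, -, l, hl, hl', -⟩ := H n
      omega
    intro b
    induction b with
    | zero =>
      obtain ⟨S, hSU, hS, l, h⟩ := ih (by omega)
      exact ⟨S, hSU, hS, l, Nat.zero_le _, h⟩
    | succ b ihb =>
      obtain ⟨S, hSU, hS, l, hbl, hln, hnd, hch, hlU, hsep⟩ := ihb
      suffices H : ∃ w ∈ U, w ∉ S ∧ w ∉ l ∧ (w :: l).IsChain R by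
        obtain ⟨w, hwU, hwS, hwl, hw⟩ := H
        have hnd' : (w :: l).Nodup := List.nodup_cons.mpr ⟨hwl, hnd⟩
        have hne := hR _ hnd' hw
        refine ⟨S, hSU, hS, w :: l, by simpa using hbl, ?_, hnd', hw, ?_, ?_⟩
        · simp only [List.length_cons] at hne ⊢
          omega
        · simpa [hwU, hwS] using hlU
        · intro a ha b hb hab
          rcases hsep a ha b hb hab with h | h <;> simp [h]
      cases l with
      | nil =>
        obtain ⟨w, hw, hwS⟩ := exists_mem_notMem_of_card_lt_card (s := S) (t := U) (by omega)
        exact ⟨w, hw, hwS, by simp, by simp⟩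
      | cons v l =>
        by_contra! hno
        have hvU := hlU v (by simp)
        rw [List.nodup_cons] at hnd
        refine hcon ⟨insert v S, insert_subset hvU.1 hSU, ?_, l, ?_, hnd.2, hch.tail, ?_, ?_⟩
        · rw [card_insert_of_notMem hvU.2, hS]
        · simp only [List.length_cons] at hln
          omega
        · intro x hx
          have hxU := hlU x (by simp [hx])
          refine ⟨hxU.1, ?_⟩
          rw [mem_insert, not_or]
          exact ⟨fun e => hnd.1 (e ▸ hx), hxU.2⟩
        · intro a ha b hb hab
          rw [mem_insert] at ha ⊢
          rcases ha with rfl | ha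
          · by_contra! hb'
            refine hno b hb hb'.1.2 ?_ ?_
            · rw [List.mem_cons, not_or]
              exact ⟨hb'.1.1, hb'.2⟩
            · exact List.isChain_cons_cons.mpr ⟨hsymm hab, hch⟩
          · rcases hsep a ha b hb hab with h | h
            · exact Or.inl (Or.inr h)
            · rcases List.mem_cons.mp h with h | h
              · exact Or.inl (Or.inl h)
              · exact Or.inr h

/-- The pairs that meet `S` and lie inside `S ∪ P`. -/
def touchingPairs {V : Type*} [DecidableEq V] (S P : Finset V) : Finset (V × V) :=
  S ×ˢ (S ∪ P) ∪ P ×ˢ S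

theorem card_touchingPairs_le {V : Type*} [DecidableEq V] {S P : Finset V} {n : ℕ}
    (hS : #S = n) (hP : #P = n) : #(touchingPairs S P) ≤ 3 * n ^ 2 := by
  have h₁ := card_union_le (S ×ˢ (S ∪ P)) (P ×ˢ S)
  have h₂ := Nat.mul_le_mul_left n (card_union_le S P)
  rw [card_product, card_product, hS, hP] at h₁
  rw [hS, hP] at h₂
  unfold touchingPairs
  nlinarith

/-- Peeling off sets of size `n` one after the other bounds the number of edges (possibly
repeated, possibly loops) of a graph without a path on `n` vertices. -/
theorem PathFree.card_edges_le {V ι : Type*} [Fintype V] [DecidableEq V] [DecidableEq ι]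
    {R : V → V → Prop} {n : ℕ} (hR : PathFree R n) (hsymm : ∀ ⦃a b⦄, R a b → R b a) (hn : 0 < n)
    (I : Finset ι) (f : ι → V × V) (hf : ∀ i ∈ I, (f i).1 = (f i).2 ∨ R (f i).1 (f i).2)
    {t : ℕ} (ht : ∀ S P : Finset V, #S = n → #P = n → #{i ∈ I | f i ∈ touchingPairs S P} ≤ t)
    (M : ℕ) (U : Finset V) (hU : #U = M * n) :
    #{i ∈ I | (f i).1 ∈ U ∧ (f i).2 ∈ U} ≤ M * t := by
  induction M generalizing U with
  | zero =>
    obtain rfl : U = ∅ := by simpa using hU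
    simp
  | succ M ih =>
    have hnU : n ≤ #U := by rw [hU]; nlinarith
    obtain ⟨S, hSU, hS, P', hP', hsep⟩ := hR.exists_separated hsymm hn U hnU
    obtain ⟨P, hPP, hP⟩ := exists_superset_card_eq hP'.le (hnU.trans (card_le_univ U))
    have hdiff : #(U \ S) = M * n := by
      rw [card_sdiff_of_subset hSU, hU, hS, Nat.succ_mul, Nat.add_sub_cancel]
    have hsub : {i ∈ I | (f i).1 ∈ U ∧ (f i).2 ∈ U} ⊆
        {i ∈ I | (f i).1 ∈ U \ S ∧ (f i).2 ∈ U \ S} ∪ {i ∈ I | f i ∈ touchingPairs S P} := by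
      intro i hi
      obtain ⟨hiI, h1, h2⟩ := mem_filter.mp hi
      have hs1 : (f i).1 ∈ S → (f i).2 ∈ S ∪ P := fun h => by
        rcases hf i hiI with he | hr
        · exact mem_union_left _ (he ▸ h)
        · exact union_subset_union_right hPP (hsep _ h _ h2 hr)
      have hs2 : (f i).2 ∈ S → (f i).1 ∈ S ∪ P := fun h => by
        rcases hf i hiI with he | hr
        · exact mem_union_left _ (he ▸ h)
        · exact union_subset_union_right hPP (hsep _ h _ h1 (hsymm hr))
      simp only [mem_union, mem_filter, mem_sdiff, touchingPairs, mem_product] at hs1 hs2 ⊢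
      tauto
    calc _ ≤ _ := card_le_card hsub
      _ ≤ _ := card_union_le _ _
      _ ≤ M * t + t := add_le_add (ih _ hdiff) (ht S P hS hP)
      _ = (M + 1) * t := by ring

/-- A relation without a copy of `pathGraph n` is path-free. -/
theorem pathFree_of_forall_not_pathGraph {V : Type*} {R : V → V → Prop}
    (hsymm : ∀ ⦃a b⦄, R a b → R b a) {n : ℕ} (h : ∀ f : Fin n → V, Function.Injective f →
      ¬ ∀ a b, (pathGraph n).Adj a b → R (f a) (f b)) : PathFree R n := by
  rintro l hnd hch rfl
  refine h l.get (List.nodup_iff_injective_get.mp hnd) fun a b hab => ?_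
  rw [List.isChain_iff_getElem] at hch
  rcases a with ⟨a, ha⟩
  rcases b with ⟨b, hb⟩
  rw [pathGraph_adj] at hab
  rcases hab with hab | hab
  · obtain rfl : a + 1 = b := hab
    exact hch a hb
  · obtain rfl : b + 1 = a := hab
    exact hsymm (hch b ha)

/-- A sequence of pairs in which every pair of `n`-sets captures fewer than `s` terms spans a
graph that arrows the path on `n` vertices. -/
theorem arrows_path_of_card_touchingPairs_lt {r n s : ℕ} (hr : 0 < r) (hn : 0 < n) {M : ℕ}
    (f : Fin (M * r * s) → Fin (M * n) × Fin (M * n)) (hM : 0 < M)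
    (hf : ∀ S P : Finset (Fin (M * n)), #S = n → #P = n → #{i | f i ∈ touchingPairs S P} < s) :
    Arrows (fromEdgeSet (Set.range fun i => s((f i).1, (f i).2))) (pathGraph n) r := by
  intro c
  set G := fromEdgeSet (Set.range fun i => s((f i).1, (f i).2)) with hG
  by_contra! hcon
  have hs : 0 < s := by
    have hcard : n ≤ #(univ : Finset (Fin (M * n))) := by
      rw [card_univ, Fintype.card_fin]; nlinarith
    obtain ⟨S, -, hS⟩ := exists_subset_card_eq hcard
    exact (Nat.zero_le _).trans_lt (hf S S hS hS)
  have hcolour : ∀ k ∈ (univ : Finset (Fin r)),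
      #{i ∈ univ | c s((f i).1, (f i).2) = k} ≤ M * (s - 1) := by
    intro k _
    let R : Fin (M * n) → Fin (M * n) → Prop := fun a b => G.Adj a b ∧ c s(a, b) = k
    have hsymm : ∀ ⦃a b⦄, R a b → R b a := fun a b h => ⟨h.1.symm, by rw [Sym2.eq_swap]; exact h.2⟩
    have hR : PathFree R n := by
      refine pathFree_of_forall_not_pathGraph hsymm fun g hg hall => ?_
      obtain ⟨a, b, hab, hne⟩ := hcon k g hg
      exact hne (hall a b hab).1 (hall a b hab).2
    have := hR.card_edges_le hsymm hn {i ∈ univ | c s((f i).1, (f i).2) = k} f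
      (fun i hi => ?_) (t := s - 1) (fun S P hS hP => ?_) M univ (by simp)
    · simpa using this
    · by_cases he : (f i).1 = (f i).2
      · exact Or.inl he
      · refine Or.inr ⟨?_, (mem_filter.mp hi).2⟩
        rw [hG, fromEdgeSet_adj]
        exact ⟨⟨i, rfl⟩, he⟩
    · have h₁ := hf S P hS hP
      have h₂ : #{i ∈ {i ∈ univ | c s((f i).1, (f i).2) = k} | f i ∈ touchingPairs S P} ≤
          #{i | f i ∈ touchingPairs S P} := card_le_card (filter_subset_filter _ (subset_univ _))
      omega
  have hsum := card_le_mul_card_image_of_maps_to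
    (f := fun i : Fin (M * r * s) => c s((f i).1, (f i).2)) (s := univ) (t := univ)
    (fun _ _ => mem_univ _) (M * (s - 1)) hcolour
  rw [card_univ, card_univ, Fintype.card_fin, Fintype.card_fin] at hsum
  have hlt : M * (s - 1) * r < M * s * r :=
    Nat.mul_lt_mul_of_pos_right (Nat.mul_lt_mul_of_pos_left (by omega) hM) hr
  nlinarith

theorem sizeRamsey_le_of_arrows {W ι : Type*} [Fintype ι] {F : SimpleGraph W} {r N : ℕ}
    (e : ι → Sym2 (Fin N)) (h : Arrows (fromEdgeSet (Set.range e)) F r) :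
    sizeRamsey F r ≤ Fintype.card ι := by
  have hle : sizeRamsey F r ≤ (fromEdgeSet (Set.range e)).edgeSet.ncard :=
    Nat.sInf_le ⟨N, _, rfl, h⟩
  refine hle.trans ?_
  rw [edgeSet_fromEdgeSet]
  calc _ ≤ (Set.range e).ncard := Set.ncard_le_ncard Set.sdiff_subset (Set.finite_range e)
    _ ≤ Fintype.card ι := by
      rw [← Set.image_univ, ← Nat.card_eq_fintype_card, ← Set.ncard_univ]
      exact Set.ncard_image_le Set.finite_univ

theorem choose_mul_self_le (c n : ℕ) : ((c * n).choose n : ℝ) ≤ (c * Real.exp 1) ^ n := by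
  calc ((c * n).choose n : ℝ) ≤ ((c * n : ℕ) : ℝ) ^ n / n.factorial := Nat.choose_le_pow_div _ _
    _ = c ^ n * ((n : ℝ) ^ n / n.factorial) := by push_cast; ring
    _ ≤ c ^ n * Real.exp n := by
        gcongr
        exact Real.pow_div_factorial_le_exp _ (by positivity) _
    _ = (c * Real.exp 1) ^ n := by rw [mul_pow, ← Real.exp_nat_mul, mul_one]

theorem union_bound_lt {r n s : ℕ} (hr : 2 ≤ r) (hn : 0 < n) (hs : 90 * Real.log r * n ≤ s) :
    (6 * r * n).choose n ^ 2 * ((6 * r * n) ^ 2 + 3 * n ^ 2) ^ (6 * r * r * s) <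
      2 ^ s * ((6 * r * n) ^ 2) ^ (6 * r * r * s) := by
  have hr0 : (0 : ℝ) < r := by positivity
  have hn0 : (0 : ℝ) < n := by positivity
  have hlog2 : Real.log 2 ≤ Real.log r := Real.log_le_log two_pos (by exact_mod_cast hr)
  have hl2 := Real.log_two_gt_d9
  have hlog6 : Real.log 6 ≤ 3 * Real.log 2 := by
    rw [← Real.log_rpow two_pos]
    exact Real.log_le_log (by norm_num) (by norm_num)
  have hchoose : ((6 * r * n).choose n : ℝ) ^ 2 ≤
      Real.exp (2 * n * (Real.log 6 + Real.log r + 1)) := by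
    have h := choose_mul_self_le (6 * r) n
    have he : (((6 * r : ℕ) : ℝ) * Real.exp 1) = Real.exp (Real.log 6 + Real.log r + 1) := by
      rw [Real.exp_add, Real.exp_add, Real.exp_log (by norm_num), Real.exp_log hr0]
      push_cast; rfl
    rw [he, ← Real.exp_nat_mul] at h
    calc _ ≤ Real.exp (n * (Real.log 6 + Real.log r + 1)) ^ 2 := by gcongr
      _ = _ := by rw [← Real.exp_nat_mul]; congr 1; push_cast; ring
  have hbase : (6 * r * n : ℝ) ^ 2 + 3 * n ^ 2 ≤
      (6 * r * n : ℝ) ^ 2 * Real.exp (1 / (12 * r ^ 2)) := by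
    calc _ = (6 * r * n : ℝ) ^ 2 * (1 / (12 * r ^ 2) + 1) := by field_simp; ring
      _ ≤ _ := by gcongr; exact Real.add_one_le_exp _
  have hpow : ((6 * r * n : ℝ) ^ 2 + 3 * n ^ 2) ^ (6 * r * r * s) ≤
      ((6 * r * n : ℝ) ^ 2) ^ (6 * r * r * s) * Real.exp (s / 2) := by
    calc _ ≤ ((6 * r * n : ℝ) ^ 2 * Real.exp (1 / (12 * r ^ 2))) ^ (6 * r * r * s) := by gcongr
      _ = _ := by
        rw [mul_pow, ← Real.exp_nat_mul]
        congr 2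
        push_cast
        field_simp
        ring
  have htwo : (2 : ℝ) ^ s = Real.exp (s * Real.log 2) := by
    rw [Real.exp_nat_mul, Real.exp_log two_pos]
  have hexp : 2 * n * (Real.log 6 + Real.log r + 1) + (s : ℝ) / 2 < s * Real.log 2 := by
    have h₁ : n * (Real.log 6 + Real.log r + 1) ≤ n * (5.5 * Real.log r) := by
      gcongr; linarith
    have h₂ : 0 < n * Real.log r := mul_pos hn0 (by linarith)
    have h₃ : (s : ℝ) * 0.69 ≤ s * Real.log 2 := by gcongr; linarith
    linarith
  have key : ((6 * r * n).choose n : ℝ) ^ 2 * ((6 * r * n : ℝ) ^ 2 + 3 * n ^ 2) ^ (6 * r * r * s) <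
      2 ^ s * ((6 * r * n : ℝ) ^ 2) ^ (6 * r * r * s) := by
    calc _ ≤ Real.exp (2 * n * (Real.log 6 + Real.log r + 1)) *
          (((6 * r * n : ℝ) ^ 2) ^ (6 * r * r * s) * Real.exp (s / 2)) := by gcongr
      _ = Real.exp (2 * n * (Real.log 6 + Real.log r + 1) + s / 2) *
          ((6 * r * n : ℝ) ^ 2) ^ (6 * r * r * s) := by rw [Real.exp_add]; ring
      _ < _ := by rw [htwo]; gcongr
  exact_mod_cast key

/-- For every integer `r ≥ 2` there is `N` such that for all `n ≥ N`,
`R̂(Pₙ, r) < 600 (log r) r² n`. -/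
theorem sizeRamsey_path_lt (r : ℕ) (hr : 2 ≤ r) :
    ∃ N : ℕ, ∀ n : ℕ, N ≤ n →
      (sizeRamsey (pathGraph n) r : ℝ) < 600 * Real.log r * r ^ 2 * n := by
  refine ⟨1, fun n hn => ?_⟩
  set s := ⌈90 * Real.log r * n⌉₊
  have hlog : Real.log 2 ≤ Real.log r := Real.log_le_log two_pos (by exact_mod_cast hr)
  have hl2 := Real.log_two_gt_d9
  have hn1 : (1 : ℝ) ≤ n := by exact_mod_cast hn
  have hsle : (s : ℝ) < 100 * Real.log r * n := by
    have h₁ := Nat.ceil_lt_add_one (a := 90 * Real.log r * n)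
      (mul_nonneg (by linarith) (by linarith))
    have h₂ : (0.5 : ℝ) * 1 ≤ Real.log r * n := by gcongr; linarith
    linarith
  let I : Finset (Finset (Fin (6 * r * n)) × Finset (Fin (6 * r * n))) :=
    powersetCard n univ ×ˢ powersetCard n univ
  obtain ⟨f, hf⟩ := exists_seq_card_hits_lt I (fun q => touchingPairs q.1 q.2)
    (3 * n ^ 2) (6 * r * r * s) s
    (fun q hq => by
      obtain ⟨h₁, h₂⟩ := mem_product.mp hq
      exact card_touchingPairs_le (mem_powersetCard.mp h₁).2 (mem_powersetCard.mp h₂).2)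
    (by simpa [I, ← sq] using union_bound_lt hr hn (Nat.le_ceil _))
  have harr := arrows_path_of_card_touchingPairs_lt (by omega) hn f (by omega)
    fun S P hS hP => hf (S, P) (by simp [I, hS, hP])
  have hle : (sizeRamsey (pathGraph n) r : ℝ) ≤ 6 * r * r * s := by
    exact_mod_cast (sizeRamsey_le_of_arrows _ harr).trans_eq (Fintype.card_fin _)
  calc _ ≤ (6 * r * r * s : ℝ) := hle
    _ < 6 * r * r * (100 * Real.log r * n) := by gcongr
    _ = _ := by ring
end

section
/- For every real number C > 5 and every integer r ≥ 2 there exists an integer N such that for every integer n ≥ N, the r-colour size-Ramsey number of the path on n vertices satisfies R̂(P_n, r) < 400⁵ · C · r^{2 + 1/(C−4)} · n. -/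
open SimpleGraph

/-- The state of a depth-first search of `H` inside `A` once `k` vertices are fully explored:
`S` is the set of explored vertices and `l` is the stack, which forms a path. -/
lemma exists_dfs_state {V : Type*} [DecidableEq V] (H : SimpleGraph V) (A : Finset V) (k : ℕ)
    (hk : k ≤ A.card) :
    ∃ (S : Finset V) (l : List V), S ⊆ A ∧ S.card = k ∧ l.Nodup ∧ l.IsChain H.Adj ∧
      (∀ v ∈ l, v ∈ A ∧ v ∉ S) ∧ ∀ u ∈ S, ∀ v ∈ A, H.Adj u v → v ∈ S ∨ v ∈ l := by
  induction k with
  | zero => exact ⟨∅, [], by simp⟩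
  | succ k ih =>
    obtain ⟨S, l, hSA, hSk, hl⟩ := ih (by omega)
    obtain ⟨x, hxA, hxS⟩ : ∃ x ∈ A, x ∉ S :=
      Finset.exists_mem_notMem_of_card_lt_card (by omega)
    induction hj : (A \ (S ∪ l.toFinset)).card using Nat.strong_induction_on generalizing l with
    | _ j ihj =>
      obtain ⟨hnd, hch, hmem, hadj⟩ := hl
      have push : ∀ w, w ∈ A → w ∉ S → w ∉ l →
          (A \ (S ∪ (w :: l).toFinset)).card < j := by
        intro w hwA hwS hwl
        rw [← hj]
        refine Finset.card_lt_card (Finset.ssubset_iff_of_subset ?_ |>.2 ⟨w, ?_, ?_⟩)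
        · intro y; simp; tauto
        · simp [hwA, hwS, hwl]
        · simp
      cases l with
      | nil =>
        refine ihj _ (push x hxA hxS (by simp)) [x] ⟨by simp, by simp, ?_, ?_⟩ rfl
        · simp [hxA, hxS]
        · intro u hu v hv huv
          have := hadj u hu v hv huv
          simp at this
          exact Or.inl this
      | cons v l =>
        by_cases hw : ∃ w ∈ A, w ∉ S ∧ w ∉ v :: l ∧ H.Adj v w
        · obtain ⟨w, hwA, hwS, hwl, hvw⟩ := hw
          refine ihj _ (push w hwA hwS hwl) (w :: v :: l)
            ⟨List.nodup_cons.2 ⟨hwl, hnd⟩, List.isChain_cons_cons.2 ⟨hvw.symm, hch⟩, ?_, ?_⟩ rfl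
          · intro y hy
            rcases List.mem_cons.1 hy with rfl | hy
            · exact ⟨hwA, hwS⟩
            · exact hmem y hy
          · intro u hu y hy huy
            exact (hadj u hu y hy huy).imp_right (List.mem_cons_of_mem _)
        · push Not at hw
          have hv := hmem v (by simp)
          have hnd' := List.nodup_cons.1 hnd
          refine ⟨insert v S, l, ?_, ?_, hnd'.2, hch.of_cons, ?_, ?_⟩
          · exact Finset.insert_subset hv.1 hSA
          · rw [Finset.card_insert_of_notMem hv.2, hSk]
          · intro y hy
            have := hmem y (by simp [hy])
            refine ⟨this.1, ?_⟩
            rw [Finset.mem_insert]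
            rintro (rfl | h)
            · exact hnd'.1 hy
            · exact this.2 h
          · intro u hu y hy huy
            rcases Finset.mem_insert.1 hu with rfl | hu
            · by_contra hcon
              refine hw y hy (by simp_all) ?_ huy
              simp_all
            · have := hadj u hu y hy huy
              simp only [List.mem_cons] at this
              rw [Finset.mem_insert]
              tauto

/-- A graph without a path on `n` vertices has its vertices and edges covered by few sets of
size at most `2 * n`. -/
lemma exists_cover_of_no_path {V : Type*} [DecidableEq V] (H : SimpleGraph V) (n : ℕ)
    (hn : ¬ ∃ f : Fin n → V, Function.Injective f ∧
      ∀ a b, (pathGraph n).Adj a b → H.Adj (f a) (f b))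
    (a : ℕ) (A : Finset V) (hA : A.card ≤ a * n) :
    ∃ W : Fin a → Finset V, (∀ j, (W j).card ≤ 2 * n) ∧
      ∀ u ∈ A, ∀ v ∈ A, (u = v ∨ H.Adj u v) → ∃ j, u ∈ W j ∧ v ∈ W j := by
  induction a generalizing A with
  | zero =>
    have : A = ∅ := by simpa using hA
    subst this
    exact ⟨fun _ => ∅, by simp⟩
  | succ a ih =>
    rcases le_total A.card n with hAn | hAn
    · exact ⟨fun _ => A, fun _ => hAn.trans (by omega), fun u hu v hv _ => ⟨0, hu, hv⟩⟩
    obtain ⟨S, l, hSA, hSn, hnd, hch, hmem, hadj⟩ := exists_dfs_state H A n hAn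
    have hl : l.length < n := by
      by_contra hcon
      push Not at hcon
      refine hn ⟨fun i => l[i.val]'(i.2.trans_le hcon), ?_, ?_⟩
      · intro i j hij
        exact Fin.ext ((List.Nodup.getElem_inj_iff hnd).1 hij)
      · have key : ∀ i : ℕ, (h : i + 1 < l.length) → H.Adj l[i] l[i + 1] :=
          fun i h => List.isChain_iff_getElem.1 hch i h
        intro x y hxy
        rw [pathGraph_adj] at hxy
        rcases hxy with hxy | hxy
        · simp only [← hxy]
          exact key _ _
        · simp only [← hxy]
          exact (key _ _).symm
    obtain ⟨W, hW, hcov⟩ := ih (A \ S) (by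
      rw [Finset.card_sdiff_of_subset hSA, hSn]
      rw [Nat.succ_mul] at hA
      omega)
    refine ⟨Fin.cons (S ∪ l.toFinset) W, ?_, ?_⟩
    · intro j
      refine Fin.cases ?_ (fun i => ?_) j
      · rw [Fin.cons_zero]
        have := Finset.card_union_le S l.toFinset
        have := l.toFinset_card_le
        omega
      · simpa using hW i
    · intro u hu v hv huv
      by_cases hS : u ∈ S ∨ v ∈ S
      · refine ⟨0, ?_⟩
        rw [Fin.cons_zero]
        simp only [Finset.mem_union, List.mem_toFinset]
        rcases huv with rfl | huv
        · simp_all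
        · rcases hS with hS | hS
          · exact ⟨Or.inl hS, hadj u hS v hv huv⟩
          · exact ⟨hadj v hS u hu huv.symm, Or.inl hS⟩
      · push Not at hS
        obtain ⟨j, hj⟩ := hcov u (by simp [hu, hS]) v (by simp [hv, hS]) huv
        exact ⟨j.succ, by simpa using hj⟩

/-- First-moment argument: some sequence of `m` pairs of vertices has fewer than `t` of its terms
inside each `k`-set of vertices. -/
lemma exists_sparse_pairs {V : Type*} [Fintype V] [DecidableEq V] (k m t : ℕ)
    (h : (Fintype.card V).choose k * m.choose t *
      ((k * k) ^ t * (Fintype.card V * Fintype.card V) ^ (m - t)) <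
        (Fintype.card V * Fintype.card V) ^ m) :
    ∃ ω : Fin m → V × V, ∀ W : Finset V, W.card = k →
      (Finset.univ.filter fun i => ω i ∈ W ×ˢ W).card < t := by
  classical
  by_contra! hcon
  let bad : Finset V × Finset (Fin m) → Finset (Fin m → V × V) := fun p =>
    Fintype.piFinset fun i => if i ∈ p.2 then p.1 ×ˢ p.1 else Finset.univ
  let index : Finset (Finset V × Finset (Fin m)) :=
    (Finset.univ.powersetCard k) ×ˢ (Finset.univ.powersetCard t)
  have hcover : (Finset.univ : Finset (Fin m → V × V)) ⊆ index.biUnion bad := by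
    intro ω _
    obtain ⟨W, hWk, hWt⟩ := hcon ω
    obtain ⟨I, hI, hIt⟩ := Finset.exists_subset_card_eq hWt
    refine Finset.mem_biUnion.2 ⟨(W, I), ?_, ?_⟩
    · simp [index, Finset.mem_powersetCard, hWk, hIt]
    · refine Fintype.mem_piFinset.2 fun i => ?_
      by_cases hi : i ∈ I
      · simpa [hi] using hI hi
      · simp [hi]
  have hbad : ∀ p ∈ index, (bad p).card ≤
      (k * k) ^ t * (Fintype.card V * Fintype.card V) ^ (m - t) := by
    rintro ⟨W, I⟩ hp
    simp only [index, Finset.mem_product, Finset.mem_powersetCard] at hp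
    have hcompl : (Finset.univ.filter fun i => i ∉ I).card = m - t := by
      rw [← hp.2.2, Finset.filter_not, Finset.card_sdiff_of_subset (Finset.filter_subset _ _)]
      simp
    simp only [bad, Fintype.card_piFinset, apply_ite Finset.card, Finset.card_product,
      Finset.card_univ, Fintype.card_prod, hp.1.2]
    rw [Finset.prod_ite, Finset.prod_const, Finset.prod_const, hcompl]
    simp [hp.2.2]
  have := (Finset.card_le_card hcover).trans (Finset.card_biUnion_le_card_mul _ _ _ hbad)
  simp only [index, Finset.card_product, Finset.card_powersetCard, Finset.card_univ,
    Fintype.card_fun, Fintype.card_prod, Fintype.card_fin] at this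
  omega

lemma choose_le_exp_mul_div_pow (N k : ℕ) (hk : 0 < k) :
    (N.choose k : ℝ) ≤ (Real.exp 1 * (N / k)) ^ k := by
  have hk' : (0 : ℝ) < k := by exact_mod_cast hk
  calc (N.choose k : ℝ) ≤ (N : ℝ) ^ k / k.factorial := Nat.choose_le_pow_div k N
    _ = (k : ℝ) ^ k / k.factorial * (N / k) ^ k := by
        rw [div_pow]; field_simp
    _ ≤ Real.exp k * (N / k) ^ k := by
        gcongr
        exact Real.pow_div_factorial_le_exp _ hk'.le k
    _ = (Real.exp 1 * (N / k)) ^ k := by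
        rw [mul_pow, ← Real.exp_nat_mul, mul_one]

lemma first_moment_lt (r n L : ℕ) (hr : 2 ≤ r) (hn : 0 < n) (hL : 0 < L)
    (hrL : (r : ℝ) ^ 16 < Real.exp L) :
    (64 * r * n).choose (2 * n) * (n * L * (r * (64 * r))).choose (n * L) *
      ((2 * n * (2 * n)) ^ (n * L) *
        (64 * r * n * (64 * r * n)) ^ (n * L * (r * (64 * r)) - n * L)) <
      (64 * r * n * (64 * r * n)) ^ (n * L * (r * (64 * r))) := by
  have hr' : (2 : ℝ) ≤ r := by exact_mod_cast hr
  have hn' : (0 : ℝ) < n := by exact_mod_cast hn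
  have hr0 : (0 : ℝ) < r := by linarith
  set t := n * L with ht
  have ht0 : 0 < t := Nat.mul_pos hn hL
  have ht0' : (0 : ℝ) < t := by exact_mod_cast ht0
  set m := t * (r * (64 * r)) with hm
  have htm : t ≤ m := Nat.le_mul_of_pos_right _ (by positivity)
  have he : Real.exp 1 < 4 := by linarith [Real.exp_one_lt_d9]
  have hvertex : ((64 * r * n).choose (2 * n) : ℝ) ≤ ((r : ℝ) ^ 16) ^ n := by
    refine (choose_le_exp_mul_div_pow _ _ (by omega)).trans ?_
    rw [pow_mul]
    gcongr
    have hdiv : ((64 * r * n : ℕ) : ℝ) / (2 * n : ℕ) = 32 * r := by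
      push_cast; field_simp; norm_num
    rw [hdiv]
    have h7 : (128 : ℝ) ≤ (r : ℝ) ^ 7 := by
      calc (128 : ℝ) = 2 ^ 7 := by norm_num
        _ ≤ _ := by gcongr
    calc (Real.exp 1 * (32 * r)) ^ 2 ≤ ((r : ℝ) ^ 7 * r) ^ 2 := by
          refine pow_le_pow_left₀ (by positivity) ?_ 2
          nlinarith
      _ = (r : ℝ) ^ 16 := by ring
  have hindex : (m.choose t : ℝ) ≤ (Real.exp 1 * (64 * r ^ 2)) ^ t := by
    refine (choose_le_exp_mul_div_pow _ _ ht0).trans (le_of_eq ?_)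
    rw [hm]; push_cast; congr 2; field_simp
  have hsplit : ((64 * r * n * (64 * r * n) : ℝ)) ^ m =
      (1024 * r ^ 2) ^ t * ((2 * n * (2 * n) : ℝ) ^ t *
        (64 * r * n * (64 * r * n) : ℝ) ^ (m - t)) := by
    conv_lhs => rw [← Nat.add_sub_of_le htm, pow_add]
    rw [← mul_assoc ((1024 * (r : ℝ) ^ 2) ^ t), ← mul_pow]
    congr 2
    ring
  have hmain : ((r : ℝ) ^ 16) ^ n * (Real.exp 1 * (64 * r ^ 2)) ^ t < (1024 * (r : ℝ) ^ 2) ^ t := by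
    calc ((r : ℝ) ^ 16) ^ n * (Real.exp 1 * (64 * r ^ 2)) ^ t
        < (Real.exp L) ^ n * (Real.exp 1 * (64 * r ^ 2)) ^ t := by
          gcongr
      _ = (Real.exp 1 * (Real.exp 1 * (64 * r ^ 2))) ^ t := by
          rw [mul_pow (Real.exp 1) (Real.exp 1 * _), ← Real.exp_nat_mul, ← Real.exp_nat_mul, ht]
          push_cast
          rw [mul_one]
      _ ≤ (1024 * (r : ℝ) ^ 2) ^ t := by
          refine pow_le_pow_left₀ (by positivity) ?_ t
          have : Real.exp 1 * Real.exp 1 ≤ 4 * 4 := by gcongr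
          nlinarith [sq_nonneg (r : ℝ)]
  rw [← Nat.cast_lt (α := ℝ)]
  push_cast
  rw [hsplit]
  refine mul_lt_mul_of_pos_right ?_ (by positivity)
  refine lt_of_le_of_lt ?_ hmain
  gcongr

/-- If few terms of `ω` fall inside every set of `2 * n` vertices, then the graph whose edges are
the terms of `ω` arrows the path on `n` vertices. -/
lemma arrows_of_sparse_pairs {V : Type*} [Fintype V] [DecidableEq V] {r n a t : ℕ}
    (hr : 0 < r) (ha : 2 ≤ a) (hV : Fintype.card V = a * n)
    (ω : Fin (t * (r * a)) → V × V)
    (hω : ∀ W : Finset V, W.card = 2 * n →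
      (Finset.univ.filter fun i => ω i ∈ W ×ˢ W).card < t) :
    Arrows (fromEdgeSet (Set.range fun i => s((ω i).1, (ω i).2))) (pathGraph n) r := by
  intro c
  set G := fromEdgeSet (Set.range fun i => s((ω i).1, (ω i).2)) with hG
  let H : Fin r → SimpleGraph V := fun k =>
    { Adj := fun u v => G.Adj u v ∧ c s(u, v) = k
      symm := ⟨fun u v h => ⟨h.1.symm, by rw [Sym2.eq_swap]; exact h.2⟩⟩
      loopless := ⟨fun u h => G.loopless.irrefl u h.1⟩ }
  by_contra hcon
  have hno : ∀ k, ¬ ∃ f : Fin n → V, Function.Injective f ∧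
      ∀ x y, (pathGraph n).Adj x y → (H k).Adj (f x) (f y) :=
    fun k ⟨f, hf⟩ => hcon ⟨k, f, hf⟩
  choose W hWcard hW using fun k =>
    exists_cover_of_no_path (H k) n (hno k) a Finset.univ (by rw [Finset.card_univ, hV])
  have hcov : ∀ i, ∃ j, (ω i).1 ∈ W (c s((ω i).1, (ω i).2)) j ∧
      (ω i).2 ∈ W (c s((ω i).1, (ω i).2)) j := by
    intro i
    refine hW _ _ (Finset.mem_univ _) _ (Finset.mem_univ _) ?_
    by_cases h : (ω i).1 = (ω i).2
    · exact Or.inl h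
    · exact Or.inr ⟨(fromEdgeSet_adj _).2 ⟨⟨i, rfl⟩, h⟩, rfl⟩
  choose J hJ using hcov
  have : Nonempty (Fin r × Fin a) := ⟨(⟨0, hr⟩, ⟨0, by omega⟩)⟩
  obtain ⟨⟨k, j⟩, hkj⟩ := Fintype.exists_le_card_fiber_of_mul_le_card
    (fun i => (c s((ω i).1, (ω i).2), J i)) (n := t)
    (by simp [mul_comm])
  obtain ⟨X, hX, hXcard⟩ := Finset.exists_superset_card_eq (hWcard k j)
    (by rw [hV]; exact Nat.mul_le_mul_right n ha)
  refine absurd (hω X hXcard) (not_lt.2 (hkj.trans (Finset.card_le_card ?_)))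
  intro i hi
  simp only [Finset.mem_filter, Finset.mem_univ, true_and, Prod.mk.injEq] at hi
  obtain ⟨rfl, rfl⟩ := hi
  simp only [Finset.mem_filter, Finset.mem_univ, true_and, Finset.mem_product]
  exact ⟨hX (hJ i).1, hX (hJ i).2⟩

lemma sizeRamsey_path_le (r n L : ℕ) (hr : 2 ≤ r) (hn : 0 < n) (hL : 0 < L)
    (hrL : (r : ℝ) ^ 16 < Real.exp L) :
    sizeRamsey (pathGraph n) r ≤ n * L * (r * (64 * r)) := by
  obtain ⟨ω, hω⟩ := exists_sparse_pairs (V := Fin (64 * r * n)) (2 * n)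
    (n * L * (r * (64 * r))) (n * L)
    (by simpa only [Fintype.card_fin] using first_moment_lt r n L hr hn hL hrL)
  have harrows := arrows_of_sparse_pairs (by omega) (by omega) (Fintype.card_fin _) ω hω
  refine le_trans (b := (fromEdgeSet (Set.range fun i => s((ω i).1, (ω i).2))).edgeSet.ncard)
    (Nat.sInf_le ⟨64 * r * n, _, rfl, harrows⟩) ?_
  rw [edgeSet_fromEdgeSet]
  refine (Set.ncard_le_ncard Set.sdiff_subset (Set.finite_range _)).trans ?_
  rw [← Set.image_univ]
  refine (Set.ncard_image_le Set.finite_univ).trans ?_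
  simp

/-- Krivelevich's bound: for any real `C > 5` and integer `r ≥ 2`, for all
sufficiently large `n`, `R̂(Pₙ, r) < 400⁵ · C · r^(2 + 1/(C-4)) · n`. -/
theorem sizeRamsey_path_krivelevich (C : ℝ) (hC : 5 < C) (r : ℕ) (hr : 2 ≤ r) :
    ∃ N : ℕ, ∀ n : ℕ, N ≤ n →
      (sizeRamsey (pathGraph n) r : ℝ) <
        400 ^ 5 * C * (r : ℝ) ^ (2 + 1 / (C - 4) : ℝ) * n := by
  refine ⟨1, fun n hn => ?_⟩
  have hr' : (2 : ℝ) ≤ r := by exact_mod_cast hr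
  have hr0 : (0 : ℝ) < r := by linarith
  have hn' : (1 : ℝ) ≤ n := by exact_mod_cast hn
  have hlog : 1 / 2 < Real.log r := by
    have := Real.log_le_log (by norm_num) hr'
    linarith [Real.log_two_gt_d9]
  set L := ⌊16 * Real.log r⌋₊ + 1 with hLdef
  have hL1 : 16 * Real.log r < L := by
    rw [hLdef]; push_cast; exact Nat.lt_floor_add_one _
  have hL2 : (L : ℝ) ≤ 18 * Real.log r := by
    have := Nat.floor_le (a := 16 * Real.log r) (by linarith)
    rw [hLdef]; push_cast; linarith
  have hrL : (r : ℝ) ^ 16 < Real.exp L := by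
    rw [← Real.log_lt_iff_lt_exp (by positivity), Real.log_pow]
    exact_mod_cast hL1
  have hx : 0 < C - 4 := by linarith
  set q := (r : ℝ) ^ (1 / (C - 4)) with hq
  have hq0 : 0 < q := Real.rpow_pos_of_pos hr0 _
  have hlogq : Real.log r ≤ C * q := by
    have h1 : Real.log q = 1 / (C - 4) * Real.log r := Real.log_rpow hr0 _
    have h2 : Real.log r = (C - 4) * Real.log q := by rw [h1]; field_simp
    have h3 : Real.log q ≤ q := by linarith [Real.log_le_sub_one_of_pos hq0]
    rw [h2]
    nlinarith
  have hbound : (sizeRamsey (pathGraph n) r : ℝ) ≤ n * L * (r * (64 * r)) := by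
    exact_mod_cast sizeRamsey_path_le r n L hr hn (by omega) hrL
  rw [Real.rpow_add hr0, ← hq, Real.rpow_two]
  have hpos : 0 < C * q * (r ^ 2 * n) := by positivity
  calc (sizeRamsey (pathGraph n) r : ℝ) ≤ n * L * (r * (64 * r)) := hbound
    _ = 64 * L * (r ^ 2 * n) := by ring
    _ ≤ 64 * (18 * (C * q)) * (r ^ 2 * n) := by gcongr; linarith
    _ = 1152 * (C * q * (r ^ 2 * n)) := by ring
    _ < 400 ^ 5 * (C * q * (r ^ 2 * n)) := by gcongr; norm_num
    _ = 400 ^ 5 * C * (r ^ 2 * q) * n := by ring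
end

section
/- For every integer r ≥ 2 there exists an integer N = N(r) such that for every integer n ≥ N there exists a (simple) graph G = (V, E) with the following three properties: (i) |V| = 7rn; (ii) 500 (log r) r² n < |E| < 600 (log r) r² n; and (iii) for every two disjoint sets S, T ⊆ V with |S| = |T| = n, the number of edges of G having both endpoints in S ∪ T and at least one endpoint in S is at most 70 (log r) n. -/
open SimpleGraph

/-- The set of edges of `G` with both endpoints in `S ∪ T` and at least one
endpoint in `S`. -/
def crossEdges {V : Type*} (G : SimpleGraph V) (S T : Set V) : Set (Sym2 V) :=
  {e ∈ G.edgeSet | (∀ v ∈ e, v ∈ S ∪ T) ∧ ∃ v ∈ e, v ∈ S}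

/-- Choosing elements one at a time so that an exponential potential grows no faster than it does
on average gives a set of prescribed size whose intersections with all `B i` are controlled. -/
theorem exists_subset_sum_two_pow_card_inter_le {α ι : Type*} [DecidableEq α] (E : Finset α)
    (I : Finset ι) (B : ι → Finset α) {q : ℝ} (hq : 0 ≤ q) {m : ℕ} (hm : m ≤ E.card)
    (hB : ∀ i ∈ I, ((B i).card : ℝ) ≤ q * ((E.card : ℝ) - m)) :
    ∃ A ⊆ E, A.card = m ∧
      ∑ i ∈ I, (2 : ℝ) ^ (A ∩ B i).card ≤ I.card * (1 + q) ^ m := by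
  suffices h : ∀ t ≤ m, ∃ A ⊆ E, A.card = t ∧
      ∑ i ∈ I, (2 : ℝ) ^ (A ∩ B i).card ≤ I.card * (1 + q) ^ t from h m le_rfl
  intro t
  induction t with
  | zero => exact fun _ => ⟨∅, by simp, by simp, by simp⟩
  | succ t ih =>
    intro ht
    obtain ⟨A, hAE, hAt, hA⟩ := ih (by omega)
    have hcard : ((E \ A).card : ℝ) = E.card - t := by
      rw [Finset.card_sdiff_of_subset hAE, hAt, Nat.cast_sub (by omega)]
    have htm : (t : ℝ) + 1 ≤ m := by exact_mod_cast ht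
    have hmE : (m : ℝ) ≤ E.card := by exact_mod_cast hm
    have hpos : (0 : ℝ) < (E \ A).card := by rw [hcard]; linarith
    have hne : (E \ A).Nonempty := Finset.card_pos.mp (by exact_mod_cast hpos)
    have hstep : ∀ i ∈ I, ∑ e ∈ E \ A, (2 : ℝ) ^ (insert e A ∩ B i).card ≤
        (E \ A).card * (1 + q) * (2 : ℝ) ^ (A ∩ B i).card := by
      intro i hi
      have hterm : ∀ e ∈ E \ A, (2 : ℝ) ^ (insert e A ∩ B i).card =
          (1 + if e ∈ B i then 1 else 0) * (2 : ℝ) ^ (A ∩ B i).card := by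
        intro e he
        have heA := (Finset.mem_sdiff.mp he).2
        by_cases h : e ∈ B i
        · rw [Finset.insert_inter_of_mem h, Finset.card_insert_of_notMem (by simp [heA]),
            pow_succ, if_pos h]
          ring
        · rw [Finset.insert_inter_of_notMem h, if_neg h, add_zero, one_mul]
      rw [Finset.sum_congr rfl hterm, ← Finset.sum_mul, Finset.sum_add_distrib]
      gcongr
      have hfilter : (((E \ A).filter (· ∈ B i)).card : ℝ) ≤ (B i).card := by
        exact_mod_cast Finset.card_le_card fun e he => (Finset.mem_filter.mp he).2
      have hqle : q * ((E.card : ℝ) - m) ≤ q * (E \ A).card := by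
        rw [hcard]
        gcongr
        linarith
      rw [Finset.sum_boole, Finset.sum_const, nsmul_eq_mul]
      linarith [hB i hi]
    obtain ⟨e, he, hle⟩ : ∃ e ∈ E \ A, ∑ i ∈ I, (2 : ℝ) ^ (insert e A ∩ B i).card ≤
        (1 + q) * ∑ i ∈ I, (2 : ℝ) ^ (A ∩ B i).card := by
      refine Finset.exists_le_of_sum_le hne ?_
      rw [Finset.sum_comm, Finset.sum_const, nsmul_eq_mul, ← mul_assoc, Finset.mul_sum]
      exact Finset.sum_le_sum hstep
    obtain ⟨heE, heA⟩ := Finset.mem_sdiff.mp he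
    refine ⟨insert e A, Finset.insert_subset heE hAE, by
      rw [Finset.card_insert_of_notMem heA, hAt], hle.trans ?_⟩
    calc (1 + q) * ∑ i ∈ I, (2 : ℝ) ^ (A ∩ B i).card
        ≤ (1 + q) * (I.card * (1 + q) ^ t) := by gcongr
      _ = I.card * (1 + q) ^ (t + 1) := by ring

/-- The pairs of distinct vertices inside `S`, together with the pairs between `S` and `T`. -/
def crossPairs {V : Type*} [DecidableEq V] (S T : Finset V) : Finset (Sym2 V) :=
  S.offDiag.image Sym2.mk.uncurry ∪ (S ×ˢ T).image Sym2.mk.uncurry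

theorem card_crossPairs_le {V : Type*} [DecidableEq V] {S T : Finset V} {n : ℕ}
    (hS : S.card = n) (hT : T.card = n) : ((crossPairs S T).card : ℝ) ≤ 3 / 2 * n ^ 2 := by
  have h₁ : ((S.offDiag.image Sym2.mk.uncurry).card : ℝ) = n * (n - 1) / 2 := by
    rw [Sym2.card_image_offDiag, hS, Nat.cast_choose_two]
  have h₂ : (((S ×ˢ T).image Sym2.mk.uncurry).card : ℝ) ≤ n * n := by
    have h := Finset.card_image_le (s := S ×ˢ T) (f := Sym2.mk.uncurry)
    rw [Finset.card_product, hS, hT] at h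
    exact_mod_cast h
  have h₃ : ((crossPairs S T).card : ℝ) ≤ (S.offDiag.image Sym2.mk.uncurry).card +
      ((S ×ˢ T).image Sym2.mk.uncurry).card := by
    exact_mod_cast Finset.card_union_le _ _
  have h₄ : (0 : ℝ) ≤ n := n.cast_nonneg
  linarith

theorem crossEdges_subset_crossPairs {V : Type*} [DecidableEq V] (G : SimpleGraph V)
    (S T : Finset V) : crossEdges G S T ⊆ crossPairs S T := by
  rintro ⟨x, y⟩ ⟨hG, hST, v, hv, hvS⟩
  have hxy : x ≠ y := G.ne_of_adj hG
  have hx := hST x (Sym2.mem_mk_left x y)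
  have hy := hST y (Sym2.mem_mk_right x y)
  simp only [Set.mem_union, Finset.mem_coe] at hx hy hvS
  simp only [crossPairs, Finset.coe_union, Set.mem_union, Finset.mem_coe, Finset.mem_image,
    Prod.exists, Finset.mem_offDiag, Finset.mem_product, Function.uncurry_apply_pair]
  rcases Sym2.mem_iff.mp hv with rfl | rfl
  · rcases hy with hy | hy
    · exact Or.inl ⟨v, y, ⟨hvS, hy, hxy⟩, rfl⟩
    · exact Or.inr ⟨v, y, ⟨hvS, hy⟩, rfl⟩
  · rcases hx with hx | hx
    · exact Or.inl ⟨x, v, ⟨hx, hvS, hxy⟩, rfl⟩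
    · exact Or.inr ⟨v, x, ⟨hvS, hx⟩, Sym2.eq_swap⟩

theorem choose_mul_le_exp {c : ℕ} (hc : 0 < c) (n : ℕ) :
    (((c * n).choose n : ℕ) : ℝ) ≤ Real.exp (n * (Real.log c + 1)) := by
  have hc' : (0 : ℝ) < c := by exact_mod_cast hc
  calc (((c * n).choose n : ℕ) : ℝ) ≤ ((c * n : ℕ) : ℝ) ^ n / n.factorial :=
        Nat.choose_le_pow_div n (c * n)
    _ = (c : ℝ) ^ n * ((n : ℝ) ^ n / n.factorial) := by push_cast; ring
    _ ≤ (c : ℝ) ^ n * Real.exp n := by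
        gcongr
        exact Real.pow_div_factorial_le_exp _ n.cast_nonneg n
    _ = Real.exp (n * (Real.log c + 1)) := by
        rw [mul_add, mul_one, Real.exp_add, Real.exp_nat_mul, Real.exp_log hc']

/-- For every integer `r ≥ 2` there is `N = N(r)` such that for every `n ≥ N` there
is a graph `G` on `7rn` vertices with `500 (log r) r² n < |E| < 600 (log r) r² n`,
and such that for every two disjoint vertex sets `S, T` of size `n`, the number of
edges with both endpoints in `S ∪ T` and at least one endpoint in `S` is at most
`70 (log r) n`. -/
theorem exists_good_graph (r : ℕ) (hr : 2 ≤ r) :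
    ∃ N : ℕ, ∀ n : ℕ, N ≤ n →
      ∃ G : SimpleGraph (Fin (7 * r * n)),
        (500 * Real.log r * r ^ 2 * n < (G.edgeSet.ncard : ℝ) ∧
          (G.edgeSet.ncard : ℝ) < 600 * Real.log r * r ^ 2 * n) ∧
        ∀ S T : Set (Fin (7 * r * n)), Disjoint S T → S.ncard = n → T.ncard = n →
          ((crossEdges G S T).ncard : ℝ) ≤ 70 * Real.log r * n := by
  refine ⟨7 + 1020 * r, fun n hn => ?_⟩
  set L := Real.log r
  have hr' : (2 : ℝ) ≤ r := by exact_mod_cast hr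
  have hn' : 7 + 1020 * (r : ℝ) ≤ n := by exact_mod_cast hn
  have hlog2 : 0.6931471803 < Real.log 2 := Real.log_two_gt_d9
  have hlogL : Real.log 2 ≤ L := Real.log_le_log (by norm_num) hr'
  have hLr : L ≤ r := Real.log_le_self (by linarith)
  have hLpos : 0 < L := by linarith
  obtain ⟨m, hm_gt, hm_le⟩ : ∃ m : ℕ, 500 * L * r ^ 2 * n < m ∧ (m : ℝ) ≤ 510 * L * r ^ 2 * n := by
    refine ⟨⌊500 * L * r ^ 2 * n⌋₊ + 1, by exact_mod_cast Nat.lt_floor_add_one _, ?_⟩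
    have hfloor := Nat.floor_le (show 0 ≤ 500 * L * r ^ 2 * n by positivity)
    have hLn : 1 ≤ L * n := by nlinarith
    have hone : 1 ≤ L * n * r ^ 2 := by nlinarith
    push_cast
    linarith
  have hLrn : 510 * L * r ^ 2 * n ≤ 510 * r * r ^ 2 * n := by gcongr
  set E := (⊤ : SimpleGraph (Fin (7 * r * n))).edgeFinset with hE
  have hEcard : (E.card : ℝ) = 7 * r * n * (7 * r * n - 1) / 2 := by
    rw [hE, SimpleGraph.card_edgeFinset_top_eq_card_choose_two, Fintype.card_fin,
      Nat.cast_choose_two]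
    push_cast
    ring
  have hgap : 24 * (r : ℝ) ^ 2 * n ^ 2 ≤ E.card - m := by
    have hscale : (r : ℝ) ^ 2 * n * (7 + 1020 * r) ≤ r ^ 2 * n * n := by gcongr
    have hrn : (r : ℝ) * n ≤ r ^ 2 * n := by gcongr; nlinarith
    rw [hEcard]
    linarith
  have hmE : m ≤ E.card := by
    have : (0 : ℝ) ≤ 24 * (r : ℝ) ^ 2 * n ^ 2 := by positivity
    exact_mod_cast (by linarith : (m : ℝ) ≤ E.card)
  let P := Finset.powersetCard n (Finset.univ : Finset (Fin (7 * r * n)))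
  obtain ⟨A, hAE, hAm, hA⟩ := exists_subset_sum_two_pow_card_inter_le E (P ×ˢ P)
    (fun p => crossPairs p.1 p.2) (q := 1 / (16 * (r : ℝ) ^ 2)) (by positivity) hmE (by
      intro p hp
      obtain ⟨hS, hT⟩ := Finset.mem_product.mp hp
      refine (card_crossPairs_le (Finset.mem_powersetCard.mp hS).2
        (Finset.mem_powersetCard.mp hT).2).trans ?_
      calc (3 / 2 * (n : ℝ) ^ 2) = 1 / (16 * (r : ℝ) ^ 2) * (24 * (r : ℝ) ^ 2 * n ^ 2) := by
            field_simp
            ring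
        _ ≤ _ := by gcongr)
  have hpot : ((P ×ˢ P).card : ℝ) * (1 + 1 / (16 * (r : ℝ) ^ 2)) ^ m ≤
      Real.exp (70 * L * n * Real.log 2) := by
    have hP : (P.card : ℝ) ≤ Real.exp (n * (Real.log ((7 * r : ℕ) : ℝ) + 1)) := by
      rw [Finset.card_powersetCard, Finset.card_univ, Fintype.card_fin]
      exact choose_mul_le_exp (by omega) n
    have hlog7 : Real.log ((7 * r : ℕ) : ℝ) ≤ 3 * Real.log 2 + L := by
      have h8 : Real.log 7 ≤ Real.log (2 ^ 3) := Real.log_le_log (by norm_num) (by norm_num)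
      rw [Real.log_pow] at h8
      push_cast at h8 ⊢
      rw [Real.log_mul (by norm_num) (by positivity)]
      linarith
    have hgrow : (1 + 1 / (16 * (r : ℝ) ^ 2)) ^ m ≤ Real.exp (510 / 16 * L * n) := by
      calc (1 + 1 / (16 * (r : ℝ) ^ 2)) ^ m ≤ Real.exp (1 / (16 * (r : ℝ) ^ 2)) ^ m := by
            gcongr
            linarith [Real.add_one_le_exp (1 / (16 * (r : ℝ) ^ 2))]
        _ = Real.exp (m * (1 / (16 * (r : ℝ) ^ 2))) := (Real.exp_nat_mul _ _).symm
        _ ≤ Real.exp (510 * L * r ^ 2 * n * (1 / (16 * (r : ℝ) ^ 2))) := by gcongr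
        _ = Real.exp (510 / 16 * L * n) := by
            congr 1
            field_simp
    have hexp : 2 * (3 * Real.log 2 + L + 1) + 510 / 16 * L ≤ 70 * L * Real.log 2 := by
      nlinarith
    rw [Finset.card_product, Nat.cast_mul]
    calc (P.card : ℝ) * P.card * (1 + 1 / (16 * (r : ℝ) ^ 2)) ^ m
        ≤ Real.exp (n * (3 * Real.log 2 + L + 1)) * Real.exp (n * (3 * Real.log 2 + L + 1)) *
            Real.exp (510 / 16 * L * n) := by
          have hP' := hP.trans (Real.exp_le_exp.mpr
            (by gcongr : (n : ℝ) * (Real.log ((7 * r : ℕ) : ℝ) + 1) ≤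
              n * (3 * Real.log 2 + L + 1)))
          gcongr
      _ = Real.exp (n * (2 * (3 * Real.log 2 + L + 1) + 510 / 16 * L)) := by
          rw [← Real.exp_add, ← Real.exp_add]
          ring_nf
      _ ≤ Real.exp (n * (70 * L * Real.log 2)) := by gcongr
      _ = Real.exp (70 * L * n * Real.log 2) := by ring_nf
  have hedge : (SimpleGraph.fromEdgeSet (A : Set (Sym2 (Fin (7 * r * n))))).edgeSet = A := by
    rw [SimpleGraph.edgeSet_fromEdgeSet, sdiff_eq_left, Set.disjoint_left]
    intro e he
    have := SimpleGraph.not_isDiag_of_mem_edgeFinset (hAE he)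
    simpa using this
  refine ⟨SimpleGraph.fromEdgeSet A, ?_, fun S T _ hS hT => ?_⟩
  · rw [hedge, Set.ncard_coe_finset, hAm]
    have : 0 < L * r ^ 2 * n := by
      have : 0 < (n : ℝ) := by linarith
      positivity
    exact ⟨hm_gt, by linarith⟩
  · lift S to Finset (Fin (7 * r * n)) using S.toFinite
    lift T to Finset (Fin (7 * r * n)) using T.toFinite
    rw [Set.ncard_coe_finset] at hS hT
    have hsub : crossEdges (SimpleGraph.fromEdgeSet (A : Set (Sym2 (Fin (7 * r * n))))) S T ⊆
        ((A ∩ crossPairs S T : Finset _) : Set _) := by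
      intro e he
      rw [Finset.coe_inter]
      exact ⟨hedge ▸ he.1, crossEdges_subset_crossPairs _ S T he⟩
    have hncard := Set.ncard_le_ncard hsub (Finset.finite_toSet _)
    rw [Set.ncard_coe_finset] at hncard
    have hmem : (S, T) ∈ P ×ˢ P := by simp [P, Finset.mem_powersetCard, hS, hT]
    have hle : (2 : ℝ) ^ (A ∩ crossPairs S T).card ≤ Real.exp (70 * L * n * Real.log 2) :=
      ((Finset.single_le_sum (f := fun p : _ × _ => (2 : ℝ) ^ (A ∩ crossPairs p.1 p.2).card)
        (fun _ _ => by positivity) hmem).trans hA).trans hpot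
    rw [← Real.exp_log (show (0 : ℝ) < 2 by norm_num), ← Real.exp_nat_mul, Real.exp_le_exp,
      Real.exp_log (by norm_num)] at hle
    have hbound := le_of_mul_le_mul_right hle (by linarith)
    exact le_trans (by exact_mod_cast hncard) hbound
end

section
/- There exists a constant c > 0 such that for every integer r ≥ 2 and every integer n ≥ 1, the r-colour size-Ramsey number of the path on n vertices satisfies R̂(P_n, r) ≥ (r+3)r·n/4 − c r². -/
open SimpleGraph

section SizeRamseyPath

variable {V : Type*}

/-- The first `m + 1` values of `f` trace out a path with `m` edges in `G`. -/
def IsPathIn (G : SimpleGraph V) (m : ℕ) (f : ℕ → V) : Prop :=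
  Set.InjOn f (Set.Iic m) ∧ ∀ i < m, G.Adj (f i) (f (i + 1))

/-- The graph obtained from `G` by deleting all edges meeting `S`. -/
def awayFrom (G : SimpleGraph V) (S : Set V) : SimpleGraph V where
  Adj x y := G.Adj x y ∧ x ∉ S ∧ y ∉ S
  symm := ⟨fun _ _ h => ⟨h.1.symm, h.2.2, h.2.1⟩⟩
  loopless := ⟨fun _ h => h.1.ne rfl⟩

lemma IsPathIn.mono {G H : SimpleGraph V} {m : ℕ} {f : ℕ → V} (hf : IsPathIn G m f)
    (h : ∀ i < m, H.Adj (f i) (f (i + 1))) : IsPathIn H m f := ⟨hf.1, h⟩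

lemma IsPathIn.inj {G : SimpleGraph V} {m : ℕ} {f : ℕ → V} (hf : IsPathIn G m f)
    {i j : ℕ} (hi : i ≤ m) (hj : j ≤ m) (h : f i = f j) : i = j := hf.1 hi hj h

lemma IsPathIn.edge_inj {G : SimpleGraph V} {m : ℕ} {f : ℕ → V} (hf : IsPathIn G m f)
    {i j : ℕ} (hi : i < m) (hj : j < m) (h : s(f i, f (i + 1)) = s(f j, f (j + 1))) :
    i = j := by
  rcases Sym2.eq_iff.1 h with ⟨h1, -⟩ | ⟨h1, h2⟩
  · exact hf.inj (by omega) (by omega) h1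
  · have := hf.inj (by omega) (by omega) h1
    have := hf.inj (by omega) (by omega) h2
    omega

lemma IsPathIn.shift {G : SimpleGraph V} {m l : ℕ} {f : ℕ → V} (hf : IsPathIn G m f)
    (j : ℕ) (h : j + l ≤ m) : IsPathIn G l (fun i => f (j + i)) := by
  refine ⟨fun a ha b hb hab => ?_, fun i hi => hf.2 (j + i) (by omega)⟩
  have ha' : a ≤ l := ha
  have hb' : b ≤ l := hb
  have := hf.inj (by omega) (by omega) hab
  omega

/-- A path with a vertex in a set closed under adjacency stays in that set. -/
lemma IsPathIn.mem_of_closed {G : SimpleGraph V} {m : ℕ} {f : ℕ → V} (hf : IsPathIn G m f)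
    {I : Set V} (hI : ∀ x ∈ I, ∀ y, G.Adj x y → y ∈ I) {i : ℕ} (hi : i ≤ m) (hfi : f i ∈ I) :
    ∀ j ≤ m, f j ∈ I := by
  have h0 : ∀ i ≤ m, f i ∈ I → f 0 ∈ I := by
    intro i
    induction i with
    | zero => exact fun _ h => h
    | succ i ih => exact fun h h' => ih (by omega) (hI _ h' _ (hf.2 i (by omega)).symm)
  intro j
  induction j with
  | zero => exact fun _ => h0 i hi hfi
  | succ j ih => exact fun h => hI _ (ih (by omega)) _ (hf.2 j (by omega))

/-- If paths with `m` edges have no branching inside, then few edges suffice to destroy all of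
them, relative to the number of vertices lying deep inside such paths. -/
lemma exists_edge_cut [DecidableEq V] {m : ℕ} (hm : 4 ≤ m) (w : ℕ) :
    ∀ (W : Finset V) (Γ : SimpleGraph V), W.card ≤ w →
    (∀ f, IsPathIn Γ m f → ∀ i, 0 < i → i < m → ∀ y, Γ.Adj (f i) y →
      y = f (i - 1) ∨ y = f (i + 1)) →
    (∀ f, IsPathIn Γ m f → ∀ i, 2 ≤ i → i + 2 ≤ m → f i ∈ W) →
    ∃ Z : Finset (Sym2 V), Z.card * (m - 3) ≤ 2 * W.card ∧
      ∀ f, IsPathIn Γ m f → ∃ i < m, s(f i, f (i + 1)) ∈ Z := by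
  induction w using Nat.strong_induction_on with
  | _ w ih =>
  intro W Γ hw hdeg hW
  by_cases hex : ∃ p, IsPathIn Γ m p
  swap
  · exact ⟨∅, by simp, fun f hf => (hex ⟨f, hf⟩).elim⟩
  obtain ⟨p, hp⟩ := hex
  set I : Finset V := (Finset.Ioo 0 m).image p with hI
  set J : Finset V := (Finset.Icc 2 (m - 2)).image p with hJ
  have hJcard : J.card = m - 3 := by
    rw [hJ, Finset.card_image_of_injOn, Nat.card_Icc]
    · omega
    · intro a ha b hb hab
      simp only [Finset.coe_Icc, Set.mem_Icc] at ha hb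
      exact hp.inj (by omega) (by omega) hab
  have hJW : J ⊆ W := by
    intro x hx
    obtain ⟨i, hi, rfl⟩ := Finset.mem_image.1 hx
    rw [Finset.mem_Icc] at hi
    exact hW p hp i hi.1 (by omega)
  have hcard := Finset.card_sdiff_add_card_eq_card hJW
  have lift : ∀ f, IsPathIn (awayFrom Γ I) m f → IsPathIn Γ m f :=
    fun f hf => hf.mono fun i hi => (hf.2 i hi).1
  obtain ⟨Z, hZ, hZ'⟩ := ih (W \ J).card (by omega) (W \ J) (awayFrom Γ I) le_rfl
    (fun f hf i h1 h2 y hy => hdeg f (lift f hf) i h1 h2 y hy.1) (by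
      intro f hf i h1 h2
      refine Finset.mem_sdiff.2 ⟨hW f (lift f hf) i h1 h2, fun h => ?_⟩
      refine (hf.2 i (by omega)).2.1 ?_
      obtain ⟨j, hj, hj'⟩ := Finset.mem_image.1 h
      rw [Finset.mem_Icc] at hj
      exact Finset.mem_coe.2 (Finset.mem_image.2 ⟨j, Finset.mem_Ioo.2 (by omega), hj'⟩))
  refine ⟨insert s(p 0, p 1) (insert s(p (m - 1), p m) Z), ?_, ?_⟩
  · have h1 := Finset.card_insert_le s(p 0, p 1) (insert s(p (m - 1), p m) Z)
    have h2 := Finset.card_insert_le s(p (m - 1), p m) Z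
    calc _ ≤ (Z.card + 2) * (m - 3) := Nat.mul_le_mul_right _ (by omega)
      _ = Z.card * (m - 3) + 2 * (m - 3) := by ring
      _ ≤ _ := by omega
  · intro f hf
    by_contra! hcon
    simp only [Finset.mem_insert, not_or] at hcon
    by_cases hfI : ∃ i ≤ m, f i ∈ I
    · obtain ⟨i, hi, hfi⟩ := hfI
      let Δ := Γ.deleteEdges {s(p 0, p 1), s(p (m - 1), p m)}
      have hΔ : IsPathIn Δ m f := hf.mono fun i hi => by
        rw [SimpleGraph.deleteEdges_adj]
        refine ⟨hf.2 i hi, ?_⟩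
        simp only [Set.mem_insert_iff, Set.mem_singleton_iff, not_or]
        exact ⟨(hcon i hi).1, (hcon i hi).2.1⟩
      have hcl : ∀ x ∈ (I : Set V), ∀ y, Δ.Adj x y → y ∈ (I : Set V) := by
        intro x hx y hxy
        obtain ⟨j, hj, rfl⟩ := Finset.mem_image.1 (Finset.mem_coe.1 hx)
        rw [Finset.mem_Ioo] at hj
        rw [SimpleGraph.deleteEdges_adj] at hxy
        simp only [Set.mem_insert_iff, Set.mem_singleton_iff, not_or] at hxy
        obtain ⟨hadj, hn1, hn2⟩ := hxy
        rcases hdeg p hp j hj.1 hj.2 y hadj with rfl | rfl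
        · by_cases h : j = 1
          · subst h; exact (hn1 Sym2.eq_swap).elim
          · exact Finset.mem_coe.2 (Finset.mem_image_of_mem _ (Finset.mem_Ioo.2 (by omega)))
        · by_cases h : j + 1 = m
          · subst h; exact (hn2 rfl).elim
          · exact Finset.mem_coe.2 (Finset.mem_image_of_mem _ (Finset.mem_Ioo.2 (by omega)))
      have hall := hΔ.mem_of_closed hcl hi hfi
      have hle : (Finset.range (m + 1)).card ≤ I.card :=
        Finset.card_le_card_of_injOn f
          (fun j hj => hall j (by simpa [Nat.lt_succ_iff] using hj))
          (fun a ha b hb hab => hf.inj (by simpa [Nat.lt_succ_iff] using ha)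
            (by simpa [Nat.lt_succ_iff] using hb) hab)
      have hIle : I.card ≤ m - 1 := by
        refine Finset.card_image_le.trans ?_
        simp
      rw [Finset.card_range] at hle
      omega
    · push Not at hfI
      obtain ⟨i, hi, hiZ⟩ := hZ' f (hf.mono fun i hi =>
        ⟨hf.2 i hi, fun h => hfI i hi.le h, fun h => hfI (i + 1) hi h⟩)
      exact (hcon i hi).2.2 hiZ

section Exchange

open Classical Finset

variable [Fintype V] (H : SimpleGraph V) {K : ℕ}

/-- The number of edges of colour `b` at `v`. -/
noncomputable def colourDegree (c : Sym2 V → Fin K) (b : Fin K) (v : V) : ℕ :=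
  #{u | H.Adj v u ∧ c s(v, u) = b}

/-- The edges both of whose ends have degree two in the colour of the edge. -/
noncomputable def innerEdges (c : Sym2 V → Fin K) : Finset (Sym2 V) :=
  {e ∈ H.edgeFinset | ∀ x ∈ e, colourDegree H c (c e) x = 2}

/-- The sum of the squares of all colour degrees. -/
noncomputable def energy (c : Sym2 V → Fin K) : ℕ :=
  ∑ v, ∑ b, colourDegree H c b v ^ 2

/-- `c` minimises the energy and, among the minimisers, the number of inner edges. -/
def IsOptimal (c : Sym2 V → Fin K) : Prop :=
  ∀ c' : Sym2 V → Fin K, energy H c ≤ energy H c' ∧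
    (energy H c' = energy H c → #(innerEdges H c) ≤ #(innerEdges H c'))

lemma exists_isOptimal (hK : 0 < K) : ∃ c : Sym2 V → Fin K, IsOptimal H c := by
  have : Nonempty (Fin K) := ⟨⟨0, hK⟩⟩
  obtain ⟨c, -, hc⟩ := Finset.exists_min_image (univ : Finset (Sym2 V → Fin K))
    (fun c => toLex (energy H c, #(innerEdges H c))) univ_nonempty
  refine ⟨c, fun c' => ?_⟩
  have := hc c' (mem_univ _)
  rw [Prod.Lex.le_iff] at this
  simp only [ofLex_toLex] at this
  omega

variable {H} {c : Sym2 V → Fin K}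

lemma sum_colourDegree (v : V) : ∑ b, colourDegree H c b v = H.degree v := by
  rw [← H.card_neighborFinset_eq_degree,
    Finset.card_eq_sum_card_fiberwise (f := fun u => c s(v, u)) (t := univ) (by simp)]
  refine Finset.sum_congr rfl fun b _ => ?_
  unfold colourDegree
  congr 1
  ext u
  simp

/-- The effect on colour degrees of recolouring the edge `uv`. -/
lemma colourDegree_update {u v : V} (huv : H.Adj u v) {b : Fin K} (hb : b ≠ c s(u, v))
    (g : Fin K) (w : V) :
    (colourDegree H (Function.update c s(u, v) b) g w : ℤ) = colourDegree H c g w +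
      if w = u ∨ w = v then (if g = b then 1 else 0) - (if g = c s(u, v) then 1 else 0)
      else 0 := by
  have key : ∀ u v : V, H.Adj u v → b ≠ c s(u, v) →
      (colourDegree H (Function.update c s(u, v) b) g u : ℤ) = colourDegree H c g u +
        ((if g = b then 1 else 0) - (if g = c s(u, v) then 1 else 0)) := by
    intro u v huv hb
    have hoff : ∀ x, x ≠ v → Function.update c s(u, v) b s(u, x) = c s(u, x) := by
      intro x hx
      refine Function.update_of_ne (fun h => hx ?_) _ _
      rcases Sym2.eq_iff.1 h with ⟨-, h⟩ | ⟨h1, h2⟩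
      · exact h
      · rw [h2, h1]
    have hsplit : ∀ c' : Sym2 V → Fin K, (colourDegree H c' g u : ℤ) =
        #{x | x ≠ v ∧ H.Adj u x ∧ c' s(u, x) = g} + if c' s(u, v) = g then 1 else 0 := by
      intro c'
      unfold colourDegree
      split_ifs with h
      · rw [← Nat.cast_add_one, Nat.cast_inj, ← Finset.card_insert_of_notMem (a := v) (by simp)]
        congr 1
        ext x
        simp only [mem_filter, mem_univ, true_and, mem_insert]
        by_cases hx : x = v
        · subst hx; simp [huv, h]
        · simp [hx]
      · rw [add_zero, Nat.cast_inj]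
        congr 1
        ext x
        simp only [mem_filter, mem_univ, true_and]
        by_cases hx : x = v
        · subst hx; simp [h]
        · simp [hx]
    rw [hsplit, hsplit c, Function.update_self]
    have : #{x | x ≠ v ∧ H.Adj u x ∧ Function.update c s(u, v) b s(u, x) = g} =
        #{x | x ≠ v ∧ H.Adj u x ∧ c s(u, x) = g} := by
      congr 1
      ext x
      simp only [mem_filter, mem_univ, true_and]
      constructor <;> rintro ⟨h1, h2⟩ <;> refine ⟨h1, ?_⟩
      · rwa [hoff x h1] at h2
      · rwa [hoff x h1]
    rw [this]
    simp only [eq_comm (a := g)]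
    ring
  by_cases hwu : w = u
  · subst hwu
    simpa using key w v huv hb
  by_cases hwv : w = v
  · subst hwv
    have := key w u huv.symm (by rwa [Sym2.eq_swap])
    rw [Sym2.eq_swap] at this
    simpa using this
  · rw [if_neg (by tauto), add_zero, Nat.cast_inj]
    unfold colourDegree
    congr 1
    ext x
    have : s(w, x) ≠ s(u, v) := by
      intro h
      rcases Sym2.eq_iff.1 h with ⟨h, -⟩ | ⟨h, -⟩ <;> contradiction
    simp [Function.update_of_ne this]

lemma energy_update {u v : V} (huv : H.Adj u v) {b : Fin K} (hb : b ≠ c s(u, v)) :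
    energy H (Function.update c s(u, v) b) +
      2 * (colourDegree H c (c s(u, v)) u + colourDegree H c (c s(u, v)) v) =
    energy H c + 2 * (colourDegree H c b u + colourDegree H c b v) + 4 := by
  have hne := huv.ne
  have hpt : ∀ w g, (colourDegree H (Function.update c s(u, v) b) g w : ℤ) ^ 2 =
      (colourDegree H c g w : ℤ) ^ 2 +
      ((if w = u then (if g = b then 2 * (colourDegree H c g w : ℤ) + 1 else 0) else 0) +
       (if w = u then
         (if g = c s(u, v) then 1 - 2 * (colourDegree H c g w : ℤ) else 0) else 0) +
       (if w = v then (if g = b then 2 * (colourDegree H c g w : ℤ) + 1 else 0) else 0) +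
       (if w = v then
         (if g = c s(u, v) then 1 - 2 * (colourDegree H c g w : ℤ) else 0) else 0)) := by
    intro w g
    rw [colourDegree_update huv hb]
    have h1 : ¬ (w = u ∧ w = v) := fun h => hne (h.1.symm.trans h.2)
    have h2 : ¬ (g = b ∧ g = c s(u, v)) := fun h => hb (h.1.symm.trans h.2)
    split_ifs <;> first | (exfalso; tauto) | ring
  unfold energy
  zify
  simp only [hpt, Finset.sum_add_distrib]
  have hcol : ∀ (x : V) (φ : V → Fin K → ℤ),
      ∑ w, ∑ g, (if w = x then φ w g else 0) = ∑ g, φ x g := by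
    intro x φ
    rw [Finset.sum_comm]
    simp
  simp only [hcol, Finset.sum_ite_eq', mem_univ, if_true]
  ring

/-- An optimal colouring with `K` colours of a graph of maximum degree `K + 1`. -/
structure IsTightOptimal (H : SimpleGraph V) (c : Sym2 V → Fin K) : Prop where
  optimal : IsOptimal H c
  degree_le : ∀ v, H.degree v ≤ K + 1

lemma IsTightOptimal.le_add_two (hc : IsTightOptimal H c) {u v : V} (huv : H.Adj u v)
    (b : Fin K) : colourDegree H c (c s(u, v)) u + colourDegree H c (c s(u, v)) v ≤
      colourDegree H c b u + colourDegree H c b v + 2 := by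
  by_cases hb : b = c s(u, v)
  · subst hb; omega
  · have h1 := energy_update huv hb
    have h2 := (hc.optimal (Function.update c s(u, v) b)).1
    omega

lemma IsTightOptimal.sum_off_colour_le (hc : IsTightOptimal H c) (u v : V) (a : Fin K) :
    ∑ b ∈ univ.erase a, (colourDegree H c b u + colourDegree H c b v) +
      (colourDegree H c a u + colourDegree H c a v) ≤ 2 * (K + 1) := by
  rw [Finset.sum_erase_add _ _ (mem_univ a), Finset.sum_add_distrib, sum_colourDegree,
    sum_colourDegree]
  have := hc.degree_le u
  have := hc.degree_le v
  omega

lemma IsTightOptimal.add_le_four (hc : IsTightOptimal H c) {u v : V} (huv : H.Adj u v) :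
    colourDegree H c (c s(u, v)) u + colourDegree H c (c s(u, v)) v ≤ 4 := by
  set a := c s(u, v) with ha
  have h1 := hc.sum_off_colour_le u v a
  have h2 : ∑ b ∈ univ.erase a, (colourDegree H c a u + colourDegree H c a v) ≤
      ∑ b ∈ univ.erase a, (colourDegree H c b u + colourDegree H c b v + 2) :=
    Finset.sum_le_sum fun b _ => hc.le_add_two huv b
  rw [Finset.sum_const, Finset.sum_add_distrib, Finset.sum_const, Finset.card_erase_of_mem
    (mem_univ a), Finset.card_fin, smul_eq_mul, smul_eq_mul] at h2
  have hK : 0 < K := a.pos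
  obtain ⟨k, rfl⟩ : ∃ k, K = k + 1 := ⟨K - 1, by omega⟩
  simp only [Nat.add_sub_cancel] at h2
  by_contra! h5
  nlinarith

lemma IsTightOptimal.off_colour_eq_two (hc : IsTightOptimal H c) {u v : V} (huv : H.Adj u v)
    (hu : colourDegree H c (c s(u, v)) u = 2) (hv : colourDegree H c (c s(u, v)) v = 2)
    {b : Fin K} (hb : b ≠ c s(u, v)) :
    colourDegree H c b u + colourDegree H c b v = 2 := by
  set a := c s(u, v) with ha
  have h1 := hc.sum_off_colour_le u v a
  have hlow : ∀ b, 2 ≤ colourDegree H c b u + colourDegree H c b v := fun b => by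
    have := hc.le_add_two huv b
    rw [← ha] at this
    omega
  have hbm : b ∈ univ.erase a := Finset.mem_erase.2 ⟨hb, mem_univ _⟩
  rw [← Finset.sum_erase_add _ _ hbm] at h1
  have h2 : ∑ b ∈ (univ.erase a).erase b, 2 ≤
      ∑ b ∈ (univ.erase a).erase b, (colourDegree H c b u + colourDegree H c b v) :=
    Finset.sum_le_sum fun b _ => hlow b
  rw [Finset.sum_const, Finset.card_erase_of_mem hbm, Finset.card_erase_of_mem (mem_univ a),
    Finset.card_fin, smul_eq_mul] at h2
  have := hlow b
  have : K ≠ 1 := by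
    rintro rfl
    exact hb (Subsingleton.elim _ _)
  have := a.pos
  omega

/-- `x` is the end of an edge `xy` of colour `a` such that `x`, `y` and all their neighbours in
colour `a` have degree two in that colour. -/
def IsDeep (H : SimpleGraph V) (c : Sym2 V → Fin K) (a : Fin K) (x : V) : Prop :=
  ∃ y, H.Adj x y ∧ c s(x, y) = a ∧ colourDegree H c a x = 2 ∧ colourDegree H c a y = 2 ∧
    (∀ z, H.Adj x z → c s(x, z) = a → colourDegree H c a z = 2) ∧
    ∀ z, H.Adj y z → c s(y, z) = a → colourDegree H c a z = 2

lemma exists_other_neighbour {a : Fin K} {x : V} (y : V) (hx : colourDegree H c a x = 2) :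
    ∃ w, w ≠ y ∧ H.Adj x w ∧ c s(x, w) = a := by
  by_contra! h
  have : colourDegree H c a x ≤ #{y} := by
    refine Finset.card_le_card fun w hw => ?_
    simp only [mem_filter, mem_univ, true_and] at hw
    by_contra hwy
    exact h w (by simpa using hwy) hw.1 hw.2
  simp at this
  omega

lemma exists_unique_neighbour {a : Fin K} {x : V} (hx : colourDegree H c a x = 1) :
    ∃ w, H.Adj x w ∧ c s(x, w) = a ∧ ∀ z, H.Adj x z → c s(x, z) = a → z = w := by
  obtain ⟨w, hw⟩ := Finset.card_eq_one.1 hx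
  have hiff : ∀ z, (H.Adj x z ∧ c s(x, z) = a) ↔ z = w := fun z => by
    simpa using Finset.ext_iff.1 hw z
  exact ⟨w, ((hiff w).2 rfl).1, ((hiff w).2 rfl).2, fun z h1 h2 => (hiff z).1 ⟨h1, h2⟩⟩

/-- In an optimal colouring a deep vertex is, in every other colour, an end of a path with at
least two edges. -/
lemma IsTightOptimal.off_colour_of_isDeep (hc : IsTightOptimal H c) {a : Fin K} {u : V}
    (hu : IsDeep H c a u) {b : Fin K} (hb : b ≠ a) :
    colourDegree H c b u = 1 ∧
      ∃ z, H.Adj u z ∧ c s(u, z) = b ∧ colourDegree H c b z = 2 := by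
  obtain ⟨v, huv, rfl, hdu, hdv, hnu, hnv⟩ := hu
  set a := c s(u, v) with ha
  set c' := Function.update c s(u, v) b with hc'
  have hne := huv.ne
  have h2 := hc.off_colour_eq_two huv hdu hdv hb
  have hen : energy H c' = energy H c := by
    have := energy_update huv hb
    rw [← ha, ← hc'] at this
    omega
  have hF := (hc.optimal c').2 hen
  have hself : c' s(u, v) = b := Function.update_self ..
  have hoff : ∀ e, e ≠ s(u, v) → c' e = c e := fun e he => Function.update_of_ne he ..
  have hdeg := colourDegree_update huv hb
  have hbu : colourDegree H c' b u = colourDegree H c b u + 1 := by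
    have := hdeg b u
    simp only [true_or, if_true, ← ha, if_neg hb] at this
    zify; simpa using this
  have hbv : colourDegree H c' b v = colourDegree H c b v + 1 := by
    have := hdeg b v
    simp only [or_true, if_true, ← ha, if_neg hb] at this
    zify; simpa using this
  have hau : colourDegree H c' a u = 1 := by
    have := hdeg a u
    simp only [true_or, if_true, if_neg hb.symm, ← ha, hdu] at this
    zify; simpa using this
  have hav : colourDegree H c' a v = 1 := by
    have := hdeg a v
    simp only [or_true, if_true, if_neg hb.symm, ← ha, hdv] at this
    zify; simpa using this
  have hga : ∀ g w, g ≠ a → g ≠ b → colourDegree H c' g w = colourDegree H c g w := by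
    intro g w h1 h2
    have := hdeg g w
    rw [if_neg h1, if_neg h2] at this
    zify; simpa using this
  have hgw : ∀ g w, w ≠ u → w ≠ v → colourDegree H c' g w = colourDegree H c g w := by
    intro g w h1 h2
    have := hdeg g w
    rw [if_neg (by tauto)] at this
    zify; simpa using this
  obtain ⟨p, hpv, hup, hcp⟩ := exists_other_neighbour v hdu
  obtain ⟨q, hqu, hvq, hcq⟩ := exists_other_neighbour u hdv
  have hlost : ({s(u, v), s(u, p), s(v, q)} : Finset (Sym2 V)) ⊆ innerEdges H c := by
    intro e he
    simp only [mem_insert, mem_singleton] at he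
    simp only [innerEdges, mem_filter, SimpleGraph.mem_edgeFinset]
    rcases he with rfl | rfl | rfl
    · refine ⟨huv, ?_⟩
      simp [← ha, hdu, hdv]
    · refine ⟨hup, ?_⟩
      simp [hcp, hdu, hnu p hup hcp]
    · refine ⟨hvq, ?_⟩
      simp [hcq, hdv, hnv q hvq hcq]
  have hlostcard : #({s(u, v), s(u, p), s(v, q)} : Finset (Sym2 V)) = 3 := by
    rw [Finset.card_eq_three]
    refine ⟨_, _, _, ?_, ?_, ?_, rfl⟩ <;> rw [Ne, Sym2.eq_iff] <;> rintro (⟨h1, h3⟩ | ⟨h1, h3⟩)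
    · exact hpv h3.symm
    · exact hne h3.symm
    · exact hne h1
    · exact hqu h1.symm
    · exact hne h1
    · exact hqu h1.symm
  have hrest := Finset.card_sdiff_add_card_eq_card hlost
  -- an inner edge for the new colouring is an old one, or it meets `uv` and has colour `b`
  have hnew : ∀ e ∈ innerEdges H c', e ∈ innerEdges H c \ {s(u, v), s(u, p), s(v, q)} ∨
      (c' e = b ∧ e ∈ H.edgeFinset ∧ (u ∈ e ∨ v ∈ e)) := by
    intro e he
    simp only [innerEdges, mem_filter] at he
    obtain ⟨heE, he2⟩ := he
    by_cases hmeet : u ∈ e ∨ v ∈ e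
    · by_cases hcb : c' e = b
      · exact Or.inr ⟨hcb, heE, hmeet⟩
      left
      have hee : e ≠ s(u, v) := fun h => hcb (h ▸ hself)
      have hca : c' e ≠ a := by
        intro h
        rcases hmeet with h' | h'
        · have := he2 u h'
          rw [h] at this; omega
        · have := he2 v h'
          rw [h] at this; omega
      rw [hoff e hee] at he2 hca hcb
      refine mem_sdiff.2 ⟨mem_filter.2 ⟨heE, fun x hx => ?_⟩, ?_⟩
      · rw [← hga _ _ hca hcb]; exact he2 x hx
      · simp only [mem_insert, mem_singleton]
        rintro (rfl | rfl | rfl)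
        · exact hee rfl
        · exact hca hcp
        · exact hca hcq
    · left
      push Not at hmeet
      have hee : e ≠ s(u, v) := by
        rintro rfl
        exact hmeet.1 (Sym2.mem_mk_left _ _)
      refine mem_sdiff.2 ⟨mem_filter.2 ⟨heE, fun x hx => ?_⟩, ?_⟩
      · rw [← hgw, ← hoff e hee]
        · exact he2 x hx
        · rintro rfl; exact hmeet.1 hx
        · rintro rfl; exact hmeet.2 hx
      · simp only [mem_insert, mem_singleton]
        rintro (rfl | rfl | rfl)
        · exact hee rfl
        · exact hmeet.1 (Sym2.mem_mk_left _ _)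
        · exact hmeet.2 (Sym2.mem_mk_left _ _)
  have hcount : ∀ B : Finset (Sym2 V), (∀ e ∈ innerEdges H c', c' e = b → e ∈ H.edgeFinset →
      u ∈ e ∨ v ∈ e → e ∈ B) → 3 ≤ #B := by
    intro B hB
    have hsub : innerEdges H c' ⊆
        (innerEdges H c \ {s(u, v), s(u, p), s(v, q)}) ∪ B := by
      intro e he
      rcases hnew e he with h | ⟨h1, h3, h4⟩
      · exact mem_union_left _ h
      · exact mem_union_right _ (hB e he h1 h3 h4)
    have := (Finset.card_le_card hsub).trans (Finset.card_union_le _ _)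
    omega
  have hinner : ∀ {e x}, e ∈ innerEdges H c' → c' e = b → x ∈ e →
      colourDegree H c' b x = 2 := fun he hb hx => hb ▸ (mem_filter.1 he).2 _ hx
  have hone : colourDegree H c b u = 1 := by
    by_contra hne1
    have := hcount ∅ (by
      intro e he h1 _ h3
      exfalso
      rcases h3 with h3 | h3
      · have := hinner he h1 h3
        omega
      · have := hinner he h1 h3
        omega)
    simp at this
  have honev : colourDegree H c b v = 1 := by omega
  refine ⟨hone, ?_⟩
  obtain ⟨x, hux, hcx, hxu⟩ := exists_unique_neighbour hone
  obtain ⟨y, hvy, hcy, hyu⟩ := exists_unique_neighbour honev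
  refine ⟨x, hux, hcx, ?_⟩
  by_contra hx2
  have hxu' : x ≠ u := hux.ne.symm
  have hxv' : x ≠ v := by
    rintro rfl
    exact hb hcx.symm
  have := hcount {s(u, v), s(v, y)} (by
    intro e he h1 heE h3
    rw [SimpleGraph.mem_edgeFinset] at heE
    by_contra hB
    simp only [mem_insert, mem_singleton, not_or] at hB
    rw [hoff e hB.1] at h1
    rcases h3 with h3 | h3
    · obtain ⟨z, rfl⟩ := Sym2.mem_iff_exists.1 h3
      obtain rfl := hxu z heE h1
      have := hinner he (by rw [hoff _ hB.1, h1]) (Sym2.mem_mk_right _ _)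
      rw [hgw _ _ hxu' hxv'] at this
      exact hx2 this
    · obtain ⟨z, rfl⟩ := Sym2.mem_iff_exists.1 h3
      obtain rfl := hyu z heE h1
      exact hB.2 rfl)
  have := this.trans Finset.card_le_two
  omega

/-- The deep vertices of colour `a`. -/
noncomputable def deepVertices (H : SimpleGraph V) (c : Sym2 V → Fin K) (a : Fin K) : Finset V :=
  {x | IsDeep H c a x}

lemma IsTightOptimal.sum_card_deepVertices (hc : IsTightOptimal H c) :
    2 * K * ∑ a, #(deepVertices H c a) ≤ 3 * #H.edgeFinset := by
  have hdis : ((univ : Finset (Fin K)) : Set (Fin K)).PairwiseDisjoint (deepVertices H c) := by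
    intro a _ b _ hab
    refine Finset.disjoint_left.2 fun x hx hx' => ?_
    simp only [deepVertices, mem_filter, mem_univ, true_and] at hx hx'
    have h1 := (hc.off_colour_of_isDeep hx hab.symm).1
    obtain ⟨y, -, -, h2, -⟩ := hx'
    omega
  rw [← Finset.card_biUnion (fun a ha b hb h => hdis ha hb h)]
  set W := univ.biUnion (deepVertices H c) with hW
  have hmem : ∀ x ∈ W, ∃ a, IsDeep H c a x := by
    intro x hx
    obtain ⟨a, -, ha⟩ := Finset.mem_biUnion.1 hx
    exact ⟨a, (Finset.mem_filter.1 ha).2⟩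
  have hdeg : (K + 1) * #W ≤ 2 * #H.edgeFinset := by
    rw [← H.sum_degrees_eq_twice_card_edges]
    calc (K + 1) * #W = ∑ x ∈ W, (K + 1) := by simp [mul_comm]
      _ ≤ ∑ x ∈ W, H.degree x := by
        refine Finset.sum_le_sum fun x hx => ?_
        obtain ⟨a, ha⟩ := hmem x hx
        rw [← sum_colourDegree (c := c), ← Finset.sum_erase_add _ _ (mem_univ a),
          Finset.sum_congr rfl fun b hb => (hc.off_colour_of_isDeep ha (ne_of_mem_erase hb)).1]
        obtain ⟨y, -, -, h2, -⟩ := ha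
        rw [h2]
        simp
        have := a.pos
        omega
      _ ≤ _ := Finset.sum_le_sum_of_subset (subset_univ _)
  have hends : (K - 1) * #W ≤ #H.edgeFinset := by
    have hex : ∀ q : (_ : V) × Fin K, ∃ z, q.1 ∈ W → colourDegree H c q.2 q.1 = 1 →
        H.Adj q.1 z ∧ c s(q.1, z) = q.2 ∧ colourDegree H c q.2 z = 2 := by
      rintro ⟨x, b⟩
      by_cases hx : x ∈ W
      swap
      · exact ⟨x, fun h => (hx h).elim⟩
      by_cases hb : colourDegree H c b x = 1
      swap
      · exact ⟨x, fun _ h => (hb h).elim⟩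
      obtain ⟨a, ha⟩ := hmem x hx
      have hba : b ≠ a := by
        rintro rfl
        obtain ⟨y, -, -, h2, -⟩ := ha
        omega
      obtain ⟨-, z, hz⟩ := hc.off_colour_of_isDeep ha hba
      exact ⟨z, fun _ _ => hz⟩
    choose z hz using hex
    calc (K - 1) * #W = ∑ x ∈ W, (K - 1) := by simp [mul_comm]
      _ ≤ ∑ x ∈ W, #{b | colourDegree H c b x = 1} := by
        refine Finset.sum_le_sum fun x hx => ?_
        obtain ⟨a, ha⟩ := hmem x hx
        calc K - 1 = #(univ.erase a) := by simp
          _ ≤ _ := Finset.card_le_card fun b hb => by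
            simpa using (hc.off_colour_of_isDeep ha (ne_of_mem_erase hb)).1
      _ = #(W.sigma fun x => {b | colourDegree H c b x = 1}) := (Finset.card_sigma _ _).symm
      _ ≤ _ := by
        refine Finset.card_le_card_of_injOn (fun q => s(q.1, z q)) ?_ ?_
        · intro q hq
          simp only [coe_sigma, Set.mem_sigma_iff, mem_coe, mem_filter, mem_univ, true_and] at hq
          simpa using (hz q hq.1 hq.2).1
        · intro q hq q' hq' heq
          simp only [coe_sigma, Set.mem_sigma_iff, mem_coe, mem_filter, mem_univ, true_and]
            at hq hq'
          obtain ⟨-, h2, h3⟩ := hz q hq.1 hq.2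
          obtain ⟨-, h2', h3'⟩ := hz q' hq'.1 hq'.2
          have hcol : q.2 = q'.2 := by
            rw [← h2, ← h2']
            exact congrArg c heq
          rcases Sym2.eq_iff.1 heq with ⟨h4, -⟩ | ⟨h4, -⟩
          · exact Sigma.ext h4 (heq_of_eq hcol)
          · rw [← h4, ← hcol, hq.2] at h3'
            omega
  rcases K with _ | K
  · simp
  · simp only [Nat.add_sub_cancel] at hends
    nlinarith

/-- The graph of the edges of colour `a`. -/
def colourClass (H : SimpleGraph V) (c : Sym2 V → Fin K) (a : Fin K) : SimpleGraph V where
  Adj x y := H.Adj x y ∧ c s(x, y) = a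
  symm := ⟨fun x y h => ⟨h.1.symm, by rw [Sym2.eq_swap]; exact h.2⟩⟩
  loopless := ⟨fun _ h => h.1.ne rfl⟩

lemma two_le_colourDegree {a : Fin K} {m : ℕ} {f : ℕ → V}
    (hf : IsPathIn (colourClass H c a) m f) {i : ℕ} (h0 : 0 < i) (him : i < m) :
    ({f (i - 1), f (i + 1)} : Finset V) ⊆
      ({u | H.Adj (f i) u ∧ c s(f i, u) = a} : Finset V) ∧
      #({f (i - 1), f (i + 1)} : Finset V) = 2 := by
  constructor
  · intro u hu
    simp only [mem_insert, mem_singleton] at hu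
    simp only [mem_filter, mem_univ, true_and]
    rcases hu with rfl | rfl
    · have := hf.2 (i - 1) (by omega)
      rw [Nat.sub_add_cancel h0] at this
      exact this.symm
    · exact hf.2 i him
  · refine Finset.card_pair fun h => ?_
    have := hf.inj (by omega) (by omega) h
    omega

lemma IsTightOptimal.colourDegree_path (hc : IsTightOptimal H c) {a : Fin K} {m : ℕ}
    (hm : 3 ≤ m) {f : ℕ → V} (hf : IsPathIn (colourClass H c a) m f) {i : ℕ} (h0 : 0 < i)
    (him : i < m) : colourDegree H c a (f i) = 2 := by
  have hlow : ∀ j, 0 < j → j < m → 2 ≤ colourDegree H c a (f j) := fun j h1 h2 => by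
    obtain ⟨h3, h4⟩ := two_le_colourDegree hf h1 h2
    exact h4 ▸ Finset.card_le_card h3
  have hsum : ∀ j < m, colourDegree H c a (f j) + colourDegree H c a (f (j + 1)) ≤ 4 := by
    intro j hj
    obtain ⟨h1, h2⟩ := hf.2 j hj
    have := hc.add_le_four h1
    rwa [h2] at this
  have := hlow i h0 him
  by_cases h : i + 1 < m
  · have := hlow (i + 1) (by omega) h
    have := hsum i him
    omega
  · have := hlow (i - 1) (by omega) (by omega)
    have := hsum (i - 1) (by omega)
    rw [Nat.sub_add_cancel h0] at this
    omega

lemma IsTightOptimal.neighbour_path (hc : IsTightOptimal H c) {a : Fin K} {m : ℕ}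
    (hm : 3 ≤ m) {f : ℕ → V} (hf : IsPathIn (colourClass H c a) m f) {i : ℕ} (h0 : 0 < i)
    (him : i < m) {y : V} (hy : (colourClass H c a).Adj (f i) y) :
    y = f (i - 1) ∨ y = f (i + 1) := by
  obtain ⟨h1, h2⟩ := two_le_colourDegree hf h0 him
  have h3 := Finset.eq_of_subset_of_card_le h1 (by
    rw [h2]; exact (hc.colourDegree_path hm hf h0 him).le)
  have : y ∈ ({f (i - 1), f (i + 1)} : Finset V) := by
    rw [h3]
    exact mem_filter.2 ⟨mem_univ _, hy⟩
  simpa using this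

lemma IsTightOptimal.isDeep_path (hc : IsTightOptimal H c) {a : Fin K} {m : ℕ}
    (hm : 5 ≤ m) {f : ℕ → V} (hf : IsPathIn (colourClass H c a) m f) {i : ℕ} (h2 : 2 ≤ i)
    (him : i + 2 ≤ m) : IsDeep H c a (f i) := by
  have hd : ∀ j, 0 < j → j < m → colourDegree H c a (f j) = 2 := fun j h0 h1 =>
    hc.colourDegree_path (by omega) hf h0 h1
  have hn : ∀ j, 2 ≤ j → j + 2 ≤ m → ∀ z, H.Adj (f j) z → c s(f j, z) = a →
      colourDegree H c a z = 2 := by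
    intro j h1 h2 z h3 h4
    rcases hc.neighbour_path (by omega) hf (i := j) (by omega) (by omega) ⟨h3, h4⟩ with
      rfl | rfl
    · exact hd _ (by omega) (by omega)
    · exact hd _ (by omega) (by omega)
  by_cases h : i + 3 ≤ m
  · obtain ⟨h3, h4⟩ := hf.2 i (by omega)
    exact ⟨f (i + 1), h3, h4, hd _ (by omega) (by omega), hd _ (by omega) (by omega),
      hn i h2 him, hn (i + 1) (by omega) (by omega)⟩
  · obtain ⟨h3, h4⟩ := (hf.2 (i - 1) (by omega)).symm
    rw [Nat.sub_add_cancel (by omega)] at h3 h4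
    exact ⟨f (i - 1), h3, h4, hd _ (by omega) (by omega), hd _ (by omega) (by omega),
      hn i h2 him, hn (i - 1) (by omega) (by omega)⟩

/-- A graph of maximum degree at most `K + 1` has a `K`-colouring all of whose monochromatic
paths with `m` edges are destroyed by a small set of edges. -/
lemma exists_colouring_edge_cut (H : SimpleGraph V) (hK : 0 < K) {m : ℕ} (hm : 5 ≤ m)
    (hdeg : ∀ v, H.degree v ≤ K + 1) :
    ∃ (c : Sym2 V → Fin K) (Z : Finset (Sym2 V)), #Z * (m - 3) * K ≤ 3 * #H.edgeFinset ∧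
      ∀ a f, IsPathIn (colourClass H c a) m f → ∃ i < m, s(f i, f (i + 1)) ∈ Z := by
  obtain ⟨c, hopt⟩ := exists_isOptimal H hK
  have hc : IsTightOptimal H c := ⟨hopt, hdeg⟩
  have hex : ∀ a, ∃ Z : Finset (Sym2 V), #Z * (m - 3) ≤ 2 * #(deepVertices H c a) ∧
      ∀ f, IsPathIn (colourClass H c a) m f → ∃ i < m, s(f i, f (i + 1)) ∈ Z := fun a =>
    exists_edge_cut (by omega) _ (deepVertices H c a) (colourClass H c a) le_rfl
      (fun f hf i h0 h1 y hy => hc.neighbour_path (by omega) hf h0 h1 hy)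
      (fun f hf i h0 h1 => mem_filter.2 ⟨mem_univ _, hc.isDeep_path hm hf h0 h1⟩)
  choose Z hZ hcut using hex
  refine ⟨c, univ.biUnion Z, ?_, fun a f hf => ?_⟩
  · have h1 : #(univ.biUnion Z) * (m - 3) ≤ 2 * ∑ a, #(deepVertices H c a) := by
      rw [Finset.mul_sum]
      refine (Nat.mul_le_mul_right _ Finset.card_biUnion_le).trans ?_
      rw [Finset.sum_mul]
      exact Finset.sum_le_sum fun a _ => hZ a
    have h2 := hc.sum_card_deepVertices
    calc _ ≤ 2 * (∑ a, #(deepVertices H c a)) * K := Nat.mul_le_mul_right _ h1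
      _ = 2 * K * ∑ a, #(deepVertices H c a) := by ring
      _ ≤ _ := h2
  · obtain ⟨i, hi, h⟩ := hcut a f hf
    exact ⟨i, hi, mem_biUnion.2 ⟨a, mem_univ _, h⟩⟩

end Exchange

section Colouring

open Classical Finset

/-- Colours that distribute a finite set evenly, with an overflow colour `K`. -/
lemma exists_distribution {α : Type*} (Z : Finset α) (K t T : ℕ) (ht : 0 < t)
    (hZ : #Z ≤ t * K + T) :
    ∃ g : α → ℕ, (∀ e, g e ≤ K) ∧ (∀ b < K, #{e ∈ Z | g e = b} ≤ t) ∧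
      #{e ∈ Z | g e = K} ≤ T := by
  let idx : α → ℕ := fun e => if h : e ∈ Z then (Z.equivFin ⟨e, h⟩ : ℕ) else 0
  have hidx : ∀ e ∈ Z, idx e < #Z := fun e he => by simp [idx, he]
  have hinj : Set.InjOn idx Z := by
    intro e he e' he' h
    have he1 : e ∈ Z := he
    have he2 : e' ∈ Z := he'
    simp only [idx, he1, he2, dif_pos] at h
    simpa using Z.equivFin.injective (Fin.ext h)
  refine ⟨fun e => min (idx e / t) K, fun e => min_le_right _ _, fun b hb => ?_, ?_⟩
  · have : #{e ∈ Z | min (idx e / t) K = b} ≤ #(Finset.Ico (t * b) (t * b + t)) := by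
      refine Finset.card_le_card_of_injOn idx (fun e he => ?_)
        (hinj.mono fun e he => (mem_filter.1 he).1)
      have h1 : idx e / t = b := by
        have := (mem_filter.1 he).2
        omega
      have h2 := Nat.div_add_mod (idx e) t
      have h3 := Nat.mod_lt (idx e) ht
      rw [h1] at h2
      simp only [coe_Ico, Set.mem_Ico]
      omega
    simpa using this
  · have : #{e ∈ Z | min (idx e / t) K = K} ≤ #(Finset.Ico (t * K) (t * K + T)) := by
      refine Finset.card_le_card_of_injOn idx (fun e he => ?_)
        (hinj.mono fun e he => (mem_filter.1 he).1)
      have h1 : K ≤ idx e / t := by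
        have := (mem_filter.1 he).2
        omega
      have h2 := Nat.mul_le_of_le_div t _ _ h1
      have h3 := hidx e (mem_filter.1 he).1
      rw [mul_comm] at h2
      simp only [coe_Ico, Set.mem_Ico]
      omega
    simpa using this

/-- A path needs a cover of about half of its vertices. -/
lemma IsPathIn.half_le_cover {G : SimpleGraph V} {n : ℕ} {f : ℕ → V}
    (hf : IsPathIn G (n - 1) f) (S : Finset V) (Y : Finset (Sym2 V))
    (h : ∀ i < n - 1, (f i ∈ S ∨ f (i + 1) ∈ S) ∨ s(f i, f (i + 1)) ∈ Y) :
    n / 2 ≤ #S + #Y := by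
  have h1 : #{i ∈ range (n / 2) | f (2 * i) ∈ S ∨ f (2 * i + 1) ∈ S} ≤ #S := by
    refine Finset.card_le_card_of_injOn
      (fun i => if f (2 * i) ∈ S then f (2 * i) else f (2 * i + 1)) (fun i hi => ?_) ?_
    · have := (mem_filter.1 hi).2
      dsimp only
      split_ifs with h
      · exact h
      · exact this.resolve_left h
    · intro i hi j hj hij
      have hi' := mem_range.1 (mem_filter.1 hi).1
      have hj' := mem_range.1 (mem_filter.1 hj).1
      dsimp only at hij
      split_ifs at hij <;>
      · have := hf.inj (by omega) (by omega) hij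
        omega
  have h2 : #{i ∈ range (n / 2) | s(f (2 * i), f (2 * i + 1)) ∈ Y} ≤ #Y := by
    refine Finset.card_le_card_of_injOn (fun i => s(f (2 * i), f (2 * i + 1)))
      (fun i hi => (mem_filter.1 hi).2) fun i hi j hj hij => ?_
    have hi' := mem_range.1 (mem_filter.1 hi).1
    have hj' := mem_range.1 (mem_filter.1 hj).1
    have := hf.edge_inj (by omega) (by omega) hij
    omega
  have h3 : range (n / 2) ⊆ {i ∈ range (n / 2) | f (2 * i) ∈ S ∨ f (2 * i + 1) ∈ S} ∪
      {i ∈ range (n / 2) | s(f (2 * i), f (2 * i + 1)) ∈ Y} := by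
    intro i hi
    have hi' := mem_range.1 hi
    rcases h (2 * i) (by omega) with h' | h'
    · exact mem_union_left _ (mem_filter.2 ⟨hi, h'⟩)
    · exact mem_union_right _ (mem_filter.2 ⟨hi, h'⟩)
  have h4 := (Finset.card_le_card h3).trans (Finset.card_union_le _ _)
  rw [card_range] at h4
  omega

/-- A long path containing few edges of `Y` has a long subpath avoiding `Y`. -/
lemma IsPathIn.exists_block {G : SimpleGraph V} {t m l : ℕ} {f : ℕ → V}
    (hf : IsPathIn G l f) (hl : (t + 1) * m ≤ l) (Y : Finset (Sym2 V)) (hY : #Y ≤ t) :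
    ∃ j, j + m ≤ l ∧ ∀ i < m, s(f (j + i), f (j + i + 1)) ∉ Y := by
  by_contra! h
  have hjl : ∀ j : ℕ, j < t + 1 → m * j + m ≤ l := fun j hj => by
    calc m * j + m = (j + 1) * m := by ring
      _ ≤ (t + 1) * m := Nat.mul_le_mul_right _ hj
      _ ≤ l := hl
  have hex : ∀ j, ∃ i, j < t + 1 → i < m ∧ s(f (m * j + i), f (m * j + i + 1)) ∈ Y := by
    intro j
    by_cases hj : j < t + 1
    · obtain ⟨i, hi⟩ := h (m * j) (hjl j hj)
      exact ⟨i, fun _ => hi⟩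
    · exact ⟨0, fun h => (hj h).elim⟩
  choose i hi using hex
  have : #(range (t + 1)) ≤ #Y := by
    refine Finset.card_le_card_of_injOn
      (fun j => s(f (m * j + i j), f (m * j + i j + 1)))
      (fun j hj => (hi j (by simpa using hj)).2) fun a ha b hb hab => ?_
    have ha' : a < t + 1 := by simpa using ha
    have hb' : b < t + 1 := by simpa using hb
    have h1 := (hi a ha').1
    have h2 := (hi b hb').1
    have h3 := hjl a ha'
    have h4 := hjl b hb'
    have h5 := hf.edge_inj (by omega) (by omega) hab
    have h6 := congrArg (· / m) h5
    simpa [Nat.mul_add_div (show 0 < m by omega), Nat.div_eq_of_lt h1,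
      Nat.div_eq_of_lt h2] using h6
  rw [card_range] at this
  omega

lemma awayFrom_adj_of_forall {G : SimpleGraph V} {S : Finset V} {x y : V} (h : G.Adj x y)
    (hS : ¬ ∃ z ∈ s(x, y), z ∈ S) : (awayFrom G S).Adj x y := by
  push Not at hS
  exact ⟨h, hS x (Sym2.mem_mk_left _ _), hS y (Sym2.mem_mk_right _ _)⟩

variable [Fintype V]

/-- Greedily delete vertices of degree at least `d`. -/
lemma exists_greedy_deletion (G : SimpleGraph V) (d s : ℕ) :
    ∃ S : Finset V, #S ≤ s ∧ (#(awayFrom G S).edgeFinset + d * s ≤ #G.edgeFinset ∨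
      ∀ v, (awayFrom G S).degree v < d) := by
  induction s with
  | zero =>
    refine ⟨∅, by simp, Or.inl ?_⟩
    rw [mul_zero, add_zero]
    refine Finset.card_le_card fun e => ?_
    induction e with | _ x y
    simp only [SimpleGraph.mem_edgeFinset, SimpleGraph.mem_edgeSet]
    exact fun h => h.1
  | succ s ih =>
    obtain ⟨S, hS, h | h⟩ := ih
    swap
    · exact ⟨S, by omega, Or.inr h⟩
    by_cases hv : ∃ v, d ≤ (awayFrom G S).degree v
    swap
    · push Not at hv
      exact ⟨S, by omega, Or.inr hv⟩
    obtain ⟨v, hv⟩ := hv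
    refine ⟨insert v S, (Finset.card_insert_le _ _).trans (by omega), Or.inl ?_⟩
    have hdis : Disjoint (awayFrom G (insert v S : Finset V)).edgeFinset
        ((awayFrom G S).incidenceFinset v) := by
      refine Finset.disjoint_left.2 fun e => ?_
      induction e with | _ x y
      simp only [SimpleGraph.mem_edgeFinset, SimpleGraph.mem_edgeSet,
        SimpleGraph.mem_incidenceFinset]
      rintro ⟨-, h1, h2⟩ ⟨-, h3⟩
      rcases Sym2.mem_iff.1 h3 with rfl | rfl
      · exact h1 (by simp)
      · exact h2 (by simp)
    have hsub : (awayFrom G (insert v S : Finset V)).edgeFinset ∪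
        ((awayFrom G S).incidenceFinset v) ⊆ (awayFrom G S).edgeFinset := by
      refine Finset.union_subset (fun e => ?_) (SimpleGraph.incidenceFinset_subset _ _)
      induction e with | _ x y
      simp only [SimpleGraph.mem_edgeFinset, SimpleGraph.mem_edgeSet]
      rintro ⟨h1, h2, h3⟩
      exact ⟨h1, fun h => h2 (by simpa using Or.inr h), fun h => h3 (by simpa using Or.inr h)⟩
    have h1 := Finset.card_le_card hsub
    rw [Finset.card_union_of_disjoint hdis, SimpleGraph.card_incidenceFinset_eq_degree] at h1
    rw [mul_add, mul_one]
    omega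

/-- `G` has a colouring with the colours `0, …, k - 1` without monochromatic paths on `n`
vertices. -/
def HasGoodColouring {V : Type*} (G : SimpleGraph V) (k n : ℕ) : Prop :=
  ∃ c : Sym2 V → ℕ, (∀ e, c e < k) ∧
    ∀ f, IsPathIn G (n - 1) f → ∀ b, ∃ i < n - 1, c s(f i, f (i + 1)) ≠ b

lemma HasGoodColouring.of_awayFrom {G : SimpleGraph V} {S : Finset V} {k n : ℕ}
    (h : HasGoodColouring (awayFrom G S) k n) (hS : #S < n / 2) :
    HasGoodColouring G (k + 1) n := by
  obtain ⟨c, hck, hc⟩ := h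
  refine ⟨fun e => if ∃ z ∈ e, z ∈ S then k else c e, fun e => ?_, fun f hf b => ?_⟩
  · have := hck e
    dsimp only
    split_ifs <;> omega
  · by_contra! hmono
    by_cases hb : b = k
    · have := hf.half_le_cover S ∅ (fun i hi => by
        have h1 := hmono i hi
        split_ifs at h1 with h2
        · simpa using h2
        · have := hck s(f i, f (i + 1))
          omega)
      simp at this
      omega
    · have hno : ∀ i < n - 1, (¬ ∃ z ∈ s(f i, f (i + 1)), z ∈ S) ∧
          c s(f i, f (i + 1)) = b := by
        intro i hi
        have h1 := hmono i hi
        split_ifs at h1 with h2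
        · exact (hb h1.symm).elim
        · exact ⟨h2, h1⟩
      obtain ⟨i, hi, hne⟩ := hc f
        (hf.mono fun i hi => awayFrom_adj_of_forall (hf.2 i hi) (hno i hi).1) b
      exact hne (hno i hi).2

lemma hasGoodColouring_of_degree_le {G : SimpleGraph V} {S : Finset V} {K n : ℕ} (hK : 0 < K)
    (hn : 224 ≤ n) (hS : #S + 63 < n / 2)
    (hE : 4 * #(awayFrom G S).edgeFinset ≤ (K + 4) * (K + 1) * n)
    (hdeg : ∀ v, (awayFrom G S).degree v ≤ K + 1) : HasGoodColouring G (K + 1) n := by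
  set m := (n - 1) / 8 with hm
  obtain ⟨c, Z, hZ, hcut⟩ := exists_colouring_edge_cut (awayFrom G S) hK (m := m) (by omega) hdeg
  have hZcard : #Z ≤ 7 * K + 63 := by
    by_contra! hlt
    have h1 : 7 * K + 64 ≤ #Z := hlt
    have h2 : 3 * n ≤ 28 * (m - 3) := by omega
    have h3 : (7 * K + 64) * (m - 3) * K ≤ 3 * #(awayFrom G S).edgeFinset :=
      le_trans (Nat.mul_le_mul_right _ (Nat.mul_le_mul_right _ h1)) hZ
    have h4 : (K + 4) * (K + 1) * (3 * n) ≤ (K + 4) * (K + 1) * (28 * (m - 3)) :=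
      Nat.mul_le_mul_left _ h2
    have h5 : 4 * ((7 * K + 64) * (m - 3) * K) ≤ (K + 4) * (K + 1) * (28 * (m - 3)) := by
      linarith
    have h6 : 0 < m - 3 := by omega
    have h7 : 4 * (7 * K + 64) * K ≤ (K + 4) * (K + 1) * 28 := by
      refine Nat.le_of_mul_le_mul_right ?_ h6
      linarith
    nlinarith
  obtain ⟨g, hgK, hg, hgl⟩ := exists_distribution Z K 7 63 (by norm_num) hZcard
  refine ⟨fun e => if ∃ z ∈ e, z ∈ S then K else if e ∈ Z then g e else c e,
    fun e => ?_, fun f hf b => ?_⟩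
  · have := hgK e
    have := (c e).isLt
    dsimp only
    split_ifs <;> omega
  · by_contra! hmono
    rcases lt_trichotomy b K with hb | rfl | hb
    · have hno : ∀ i < n - 1, (¬ ∃ z ∈ s(f i, f (i + 1)), z ∈ S) ∧
          (if s(f i, f (i + 1)) ∈ Z then g s(f i, f (i + 1)) else c s(f i, f (i + 1))) = b := by
        intro i hi
        have h1 := hmono i hi
        by_cases h2 : ∃ z ∈ s(f i, f (i + 1)), z ∈ S
        · rw [if_pos h2] at h1
          omega
        · rw [if_neg h2] at h1
          exact ⟨h2, h1⟩
      obtain ⟨j, hj, hjY⟩ := hf.exists_block (t := 7) (m := m) (by omega) _ (hg b hb)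
      have hjZ : ∀ i < m, s(f (j + i), f (j + i + 1)) ∉ Z := by
        intro i hi hmem
        have h1 := (hno (j + i) (by omega)).2
        rw [if_pos hmem] at h1
        exact hjY i hi (mem_filter.2 ⟨hmem, h1⟩)
      obtain ⟨i, hi, hiZ⟩ := hcut ⟨b, hb⟩ (fun i => f (j + i)) ((hf.shift j hj).mono
        fun i hi => ⟨awayFrom_adj_of_forall (hf.2 (j + i) (by omega)) (hno (j + i) (by omega)).1,
          by
            have h1 := (hno (j + i) (by omega)).2
            rw [if_neg (hjZ i hi)] at h1
            exact Fin.ext h1⟩)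
      exact hjZ i hi hiZ
    · have := hf.half_le_cover S {e ∈ Z | g e = b} (fun i hi => by
        have h1 := hmono i hi
        by_cases h2 : ∃ z ∈ s(f i, f (i + 1)), z ∈ S
        · left; simpa using h2
        · rw [if_neg h2] at h1
          right
          by_cases h3 : s(f i, f (i + 1)) ∈ Z
          · rw [if_pos h3] at h1
            exact mem_filter.2 ⟨h3, h1⟩
          · rw [if_neg h3] at h1
            have := (c s(f i, f (i + 1))).isLt
            omega)
      omega
    · have h1 := hmono 0 (by omega)
      have := hgK s(f 0, f (0 + 1))
      have := (c s(f 0, f (0 + 1))).isLt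
      split_ifs at h1 <;> omega

theorem hasGoodColouring_of_card_edges {n : ℕ} (hn : 224 ≤ n) (K : ℕ) :
    ∀ G : SimpleGraph V, 4 * #G.edgeFinset + 300 * (K + 1) ^ 2 ≤ (K + 4) * (K + 1) * n →
      HasGoodColouring G (K + 1) n := by
  induction K with
  | zero =>
    intro G hG
    refine ⟨fun _ => 0, by simp, fun f hf b => ?_⟩
    exfalso
    have : #(range (n - 1)) ≤ #G.edgeFinset := by
      refine Finset.card_le_card_of_injOn (fun i => s(f i, f (i + 1))) (fun i hi => ?_)
        fun i hi j hj hij => hf.edge_inj (by simpa using hi) (by simpa using hj) hij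
      simpa using hf.2 i (by simpa using hi)
    rw [card_range] at this
    omega
  | succ K ih =>
    intro G hG
    obtain ⟨S, hS, h | h⟩ := exists_greedy_deletion G (K + 3) (n / 2 - 64)
    · refine (ih (awayFrom G S) ?_).of_awayFrom (S := S) (by omega)
      obtain ⟨s, hs, hs'⟩ : ∃ s, n / 2 - 64 = s ∧ n ≤ 2 * s + 129 := ⟨_, rfl, by omega⟩
      rw [hs] at h
      nlinarith
    · refine hasGoodColouring_of_degree_le (S := S) (by omega) hn (by omega) ?_ fun v => ?_
      · have : #(awayFrom G S).edgeFinset ≤ #G.edgeFinset := by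
          refine Finset.card_le_card fun e => ?_
          induction e with | _ x y
          simp only [SimpleGraph.mem_edgeFinset, SimpleGraph.mem_edgeSet]
          exact fun h => h.1
        nlinarith
      · have := h v
        omega

end Colouring

/-- Some finite graph arrows the path on `n` vertices. -/
lemma exists_arrows_pathGraph (n r : ℕ) (hr : 0 < r) :
    ∃ (N : ℕ) (G : SimpleGraph (Fin N)), Arrows G (pathGraph n) r := by
  classical
  let A := Fin (r * n)
  let B := Fin (n * Fintype.card (A → Fin r))
  obtain ⟨e⟩ : Nonempty (Fin (Fintype.card (A ⊕ B)) ≃ A ⊕ B) := ⟨(Fintype.equivFin _).symm⟩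
  have : NeZero r := ⟨hr.ne'⟩
  refine ⟨_, (completeBipartiteGraph A B).comap e, fun c => ?_⟩
  let χ : B → A → Fin r := fun y x => c s(e.symm (Sum.inl x), e.symm (Sum.inr y))
  obtain ⟨φ, hφ⟩ := Fintype.exists_le_card_fiber_of_mul_le_card χ (n := n) (by
    simp [B, mul_comm])
  obtain ⟨k, hk⟩ := Fintype.exists_le_card_fiber_of_mul_le_card φ (n := n) (by simp [A])
  obtain ⟨S, hS, hSc⟩ := Finset.exists_subset_card_eq hφ
  obtain ⟨T, hT, hTc⟩ := Finset.exists_subset_card_eq hk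
  let y : Fin n → B := fun i => S.orderEmbOfFin hSc i
  let x : Fin n → A := fun i => T.orderEmbOfFin hTc i
  have hcol : ∀ i j, c s(e.symm (Sum.inl (x i)), e.symm (Sum.inr (y j))) = k := by
    intro i j
    have h1 : χ (y j) = φ := by
      simpa using hS (S.orderEmbOfFin_mem hSc j)
    have h2 : φ (x i) = k := by
      simpa using hT (T.orderEmbOfFin_mem hTc i)
    rw [← h2, ← h1]
  let f : Fin n → A ⊕ B := fun i => if (i : ℕ) % 2 = 0 then Sum.inl (x i) else Sum.inr (y i)
  refine ⟨k, fun i => e.symm (f i), e.symm.injective.comp ?_, ?_⟩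
  · intro i j hij
    simp only [f] at hij
    split_ifs at hij
    · exact (T.orderEmbOfFin hTc).injective (Sum.inl_injective hij)
    · exact (S.orderEmbOfFin hSc).injective (Sum.inr_injective hij)
  · have key : ∀ a b : Fin n, (a : ℕ) + 1 = b →
        ((completeBipartiteGraph A B).comap e).Adj (e.symm (f a)) (e.symm (f b)) ∧
          c s(e.symm (f a), e.symm (f b)) = k := by
      intro a b hab
      by_cases ha : (a : ℕ) % 2 = 0
      · have hb : ¬ (b : ℕ) % 2 = 0 := by omega
        simp only [f, if_pos ha, if_neg hb]
        exact ⟨by simp, hcol _ _⟩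
      · have hb : (b : ℕ) % 2 = 0 := by omega
        simp only [f, if_pos hb, if_neg ha]
        exact ⟨by simp, by rw [Sym2.eq_swap]; exact hcol _ _⟩
    intro a b hab
    rcases pathGraph_adj.1 hab with h | h
    · exact key a b h
    · obtain ⟨h1, h2⟩ := key b a h
      exact ⟨h1.symm, by rw [Sym2.eq_swap]; exact h2⟩

lemma not_arrows_of_hasGoodColouring {N : ℕ} {G : SimpleGraph (Fin N)} {r n : ℕ} (hn : 1 ≤ n)
    (h : HasGoodColouring G r n) : ¬ Arrows G (pathGraph n) r := by
  intro hA
  obtain ⟨c, hcr, hc⟩ := h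
  obtain ⟨k, f, hf, hadj⟩ := hA fun e => ⟨c e, hcr e⟩
  let f' : ℕ → Fin N := fun i => f ⟨min i (n - 1), by omega⟩
  have hstep : ∀ i < n - 1, G.Adj (f' i) (f' (i + 1)) ∧ c s(f' i, f' (i + 1)) = k := by
    intro i hi
    obtain ⟨h1, h2⟩ := hadj ⟨min i (n - 1), by omega⟩ ⟨min (i + 1) (n - 1), by omega⟩ (by
      rw [pathGraph_adj]
      left
      simp only
      omega)
    exact ⟨h1, congrArg Fin.val h2⟩
  obtain ⟨i, hi, hne⟩ := hc f' ⟨fun a ha b hb hab => by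
    have ha' : a ≤ n - 1 := ha
    have hb' : b ≤ n - 1 := hb
    have := congrArg Fin.val (hf hab)
    simp only at this
    omega, fun i hi => (hstep i hi).1⟩ k
  exact hne (hstep i hi).2

end SizeRamseyPath

/-- Lower bound: there is `c > 0` with `R̂(Pₙ, r) ≥ (r+3)r·n/4 − c r²` for all
integers `r ≥ 2` and `n ≥ 1`. -/
theorem sizeRamsey_path_lower :
    ∃ c : ℝ, 0 < c ∧ ∀ r : ℕ, 2 ≤ r → ∀ n : ℕ, 1 ≤ n →
      ((r : ℝ) + 3) * r * n / 4 - c * r ^ 2 ≤ (sizeRamsey (pathGraph n) r : ℝ) := by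
  classical
  refine ⟨200, by norm_num, fun r hr n hn => ?_⟩
  have hr' : (2 : ℝ) ≤ r := by exact_mod_cast hr
  rcases lt_or_ge n 224 with hlt | hge
  · have hn' : (n : ℝ) ≤ 224 := by exact_mod_cast hlt.le
    have h1 : ((r : ℝ) + 3) * r * n ≤ (r + 3) * r * 224 := by gcongr
    have h2 : (0 : ℝ) ≤ sizeRamsey (pathGraph n) r := Nat.cast_nonneg _
    nlinarith
  · obtain ⟨N₀, G₀, hG₀⟩ := exists_arrows_pathGraph n r (by omega)
    obtain ⟨N, G, hcard, hG⟩ := Nat.sInf_mem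
      (s := {m | ∃ (N : ℕ) (G : SimpleGraph (Fin N)), G.edgeSet.ncard = m ∧
        Arrows G (pathGraph n) r}) ⟨_, N₀, G₀, rfl, hG₀⟩
    change _ = sizeRamsey (pathGraph n) r at hcard
    rw [← hcard, ← SimpleGraph.coe_edgeFinset, Set.ncard_coe_finset]
    by_contra! hlt
    obtain ⟨K, rfl⟩ : ∃ K, r = K + 1 := ⟨r - 1, by omega⟩
    refine not_arrows_of_hasGoodColouring hn (hasGoodColouring_of_card_edges hge K G ?_) hG
    have h3 : (4 * G.edgeFinset.card + 300 * (K + 1) ^ 2 : ℝ) ≤ (K + 4) * (K + 1) * n := by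
      push_cast at hlt
      nlinarith
    convert (show 4 * G.edgeFinset.card + 300 * (K + 1) ^ 2 ≤ (K + 4) * (K + 1) * n by
      exact_mod_cast h3)
end

section
/- There exists an integer N such that for every integer n ≥ N, the 2-colour size-Ramsey number of the path on n vertices satisfies R̂(P_n, 2) ≤ 74 n. -/
open SimpleGraph

namespace SizeRamseyPath

open Finset

variable {V : Type*}

/-- `S`, `T` and the vertices of the path `P` of `G` partition `X`, and no edge of `G` joins
`S` to `T`. -/
structure PathSeparation [DecidableEq V] (G : SimpleGraph V) (X S T : Finset V) (P : List V) :
    Prop where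
  isChain : P.IsChain G.Adj
  nodup : P.Nodup
  disjoint : Disjoint S T
  disjoint_left : ∀ v ∈ P, v ∉ S
  disjoint_right : ∀ v ∈ P, v ∉ T
  union_eq : S ∪ T ∪ P.toFinset = X
  not_adj : ∀ u ∈ S, ∀ v ∈ T, ¬ G.Adj u v

theorem PathSeparation.card_eq [DecidableEq V] {G : SimpleGraph V} {X S T : Finset V} {P : List V}
    (h : PathSeparation G X S T P) : #S + #T + P.length = #X := by
  rw [← h.union_eq, card_union_of_disjoint, card_union_of_disjoint h.disjoint,
    List.toFinset_card_of_nodup h.nodup]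
  rw [Finset.disjoint_left]
  intro v hv hP
  rw [List.mem_toFinset] at hP
  rcases mem_union.1 hv with hv | hv
  · exact h.disjoint_left v hP hv
  · exact h.disjoint_right v hP hv

/-- One step of depth-first search: either extend the path into `T` or move its head to `S`. -/
theorem PathSeparation.step [DecidableEq V] {G : SimpleGraph V} {X S T : Finset V} {P : List V}
    (h : PathSeparation G X S T P) (hlt : #S < #T) :
    ∃ S' T' P', PathSeparation G X S' T' P' ∧ #S' ≤ #T' ∧
      2 * #S' + P'.length = 2 * #S + P.length + 1 := by
  have push : ∀ w ∈ T, (w :: P).IsChain G.Adj →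
      ∃ S' T' P', PathSeparation G X S' T' P' ∧ #S' ≤ #T' ∧
        2 * #S' + P'.length = 2 * #S + P.length + 1 := by
    intro w hw hc
    refine ⟨S, T.erase w, w :: P, ⟨hc, ?_, ?_, ?_, ?_, ?_, ?_⟩, ?_, by simp; omega⟩
    · exact List.nodup_cons.2 ⟨fun hP => h.disjoint_right w hP hw, h.nodup⟩
    · exact h.disjoint.mono_right (erase_subset _ _)
    · intro v hv
      rcases List.mem_cons.1 hv with rfl | hv
      · exact fun hS => Finset.disjoint_left.1 h.disjoint hS hw
      · exact h.disjoint_left v hv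
    · intro v hv
      rcases List.mem_cons.1 hv with rfl | hv
      · simp
      · exact fun hT => h.disjoint_right v hv (mem_of_mem_erase hT)
    · rw [← h.union_eq]
      ext v
      by_cases hvw : v = w <;> simp [hvw, hw]
    · exact fun u hu v hv => h.not_adj u hu v (mem_of_mem_erase hv)
    · rw [card_erase_of_mem hw]; omega
  match P, h, push with
  | [], h, push =>
    obtain ⟨w, hw⟩ : T.Nonempty := card_pos.1 (by omega)
    exact push w hw (List.isChain_singleton w)
  | v :: P, h, push =>
    by_cases hv : ∃ w ∈ T, G.Adj w v
    · obtain ⟨w, hw, hwv⟩ := hv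
      exact push w hw (List.isChain_cons_cons.2 ⟨hwv, h.isChain⟩)
    · push Not at hv
      have hvS : v ∉ S := h.disjoint_left v (by simp)
      have hvT : v ∉ T := h.disjoint_right v (by simp)
      refine ⟨insert v S, T, P, ⟨h.isChain.tail, h.nodup.tail, ?_, ?_, ?_, ?_, ?_⟩, ?_, ?_⟩
      · exact disjoint_insert_left.2 ⟨hvT, h.disjoint⟩
      · intro u hu
        rw [mem_insert, not_or]
        refine ⟨?_, h.disjoint_left u (by simp [hu])⟩
        rintro rfl
        exact (List.nodup_cons.1 h.nodup).1 hu
      · exact fun u hu => h.disjoint_right u (by simp [hu])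
      · rw [← h.union_eq]
        ext u
        simp
      · intro u hu w hw
        rcases mem_insert.1 hu with rfl | hu
        · exact fun hadj => hv w hw hadj.symm
        · exact h.not_adj u hu w hw
      · rw [card_insert_of_notMem hvS]; omega
      · rw [card_insert_of_notMem hvS]; simp; omega

/-- The vertices of any graph split into a path and two equal-sized sets with no edge
between them. -/
theorem exists_balanced_pathSeparation [DecidableEq V] (G : SimpleGraph V) (X : Finset V) :
    ∃ S T P, PathSeparation G X S T P ∧ #S = #T := by
  by_contra! hne
  have key : ∀ m : ℕ, ∃ S T P, PathSeparation G X S T P ∧ #S ≤ #T ∧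
      2 * #S + P.length = m := by
    intro m
    induction m with
    | zero => exact ⟨∅, X, [], ⟨by simp, by simp, by simp, by simp, by simp, by simp, by simp⟩,
        by simp, by simp⟩
    | succ m ih =>
      obtain ⟨S, T, P, h, hle, rfl⟩ := ih
      exact h.step (lt_of_le_of_ne hle (hne S T P h))
  obtain ⟨S, T, P, h, hle, hm⟩ := key (2 * #X + 1)
  have := h.card_eq
  omega

/-- Along a list whose consecutive entries alternate between a set and its complement, the two
kinds of entries are equally frequent up to one. -/
theorem countP_alternating (p : V → Bool) : ∀ l : List V,
    l.IsChain (fun u v => p u = !p v) →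
      l.countP p ≤ l.countP (fun v => !p v) + 1 ∧ l.countP (fun v => !p v) ≤ l.countP p + 1 := by
  have key : ∀ (l : List V) (v : V), (v :: l).IsChain (fun u v => p u = !p v) →
      (p v = true → (v :: l).countP p ≤ (v :: l).countP (fun v => !p v) + 1 ∧
        (v :: l).countP (fun v => !p v) ≤ (v :: l).countP p) ∧
      (p v = false → (v :: l).countP p ≤ (v :: l).countP (fun v => !p v) ∧
        (v :: l).countP (fun v => !p v) ≤ (v :: l).countP p + 1) := by
    intro l
    induction l with
    | nil => intro v _; constructor <;> intro hv <;> simp [hv]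
    | cons w l ih =>
      intro v hc
      rw [List.isChain_cons_cons] at hc
      have := ih w hc.2
      constructor <;> intro hv
      · have hw : p w = false := by simpa [hv] using hc.1
        have h2 := this.2 hw
        rw [List.countP_cons (a := v), List.countP_cons (a := v)]
        simp only [hv]
        constructor <;> simp <;> omega
      · have hw : p w = true := by simpa [hv] using hc.1
        have h2 := this.1 hw
        rw [List.countP_cons (a := v), List.countP_cons (a := v)]
        simp only [hv]
        constructor <;> simp <;> omega
  intro l hc
  cases l with
  | nil => simp
  | cons v l =>
    have := key l v hc
    cases hv : p v
    · have := this.2 hv; omega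
    · have := this.1 hv; omega

/-- Labels `0, 1` and labels `2, 3` must not be joined by an edge; label `4` is unrestricted. -/
def Compatible (a b : Fin 5) : Prop :=
  ¬ ((a = 0 ∧ b = 1) ∨ (a = 1 ∧ b = 0) ∨ (a = 2 ∧ b = 3) ∨ (a = 3 ∧ b = 2))

instance : DecidableRel Compatible := fun a b => by unfold Compatible; infer_instance

/-- Class sizes `s, s, t, t` for the four restricted labels, and `r` for the last one. -/
def classSizes (s t r : ℕ) : Fin 5 → ℕ := ![s, s, t, t, r]

/-- The edges of `G` with colour `k`. -/
def colourClass (G : SimpleGraph V) (c : Sym2 V → Fin 2) (k : Fin 2) : SimpleGraph V where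
  Adj u v := G.Adj u v ∧ c s(u, v) = k
  symm := ⟨fun u v h => ⟨h.1.symm, by rw [Sym2.eq_swap]; exact h.2⟩⟩
  loopless := ⟨fun u h => G.loopless.irrefl u h.1⟩

/-- The edges of `G` between `U` and `W`. -/
def crossing (G : SimpleGraph V) (U W : Finset V) : SimpleGraph V where
  Adj u v := G.Adj u v ∧ ((u ∈ U ∧ v ∈ W) ∨ (u ∈ W ∧ v ∈ U))
  symm := ⟨fun u v h => ⟨h.1.symm, by tauto⟩⟩
  loopless := ⟨fun u h => G.loopless.irrefl u h.1⟩

theorem exists_disjoint_nonadjacent [Fintype V] [DecidableEq V] (G : SimpleGraph V)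
    (c : Sym2 V → Fin 2) {n M : ℕ} (hM : 2 * n + 2 * M ≤ Fintype.card V + 2)
    (hno : ∀ k, ∀ l : List V, l.Nodup → l.IsChain (colourClass G c k).Adj → l.length < n) :
    ∃ U W S T : Finset V, Disjoint U W ∧ Disjoint S T ∧ #(U ∩ S) = #(W ∩ T) ∧
      #(U ∩ T) = #(W ∩ S) ∧ M ≤ #(U ∩ S) + #(U ∩ T) ∧
      (∀ u ∈ U ∩ S, ∀ v ∈ W ∩ T, ¬ G.Adj u v) ∧ (∀ u ∈ U ∩ T, ∀ v ∈ W ∩ S, ¬ G.Adj u v) := by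
  obtain ⟨U, W, P, hP, hUW⟩ := exists_balanced_pathSeparation (colourClass G c 0) univ
  obtain ⟨S, T, Q, hQ, hST⟩ :=
    exists_balanced_pathSeparation (crossing (colourClass G c 1) U W) (U ∪ W)
  have hPlen := hno 0 P hP.nodup hP.isChain
  have hQlen := hno 1 Q hQ.nodup (hQ.isChain.imp fun _ _ h => h.1)
  have hPcard := hP.card_eq
  rw [card_univ] at hPcard
  have hUWd := Finset.disjoint_left.1 hP.disjoint
  have hSTd := Finset.disjoint_left.1 hQ.disjoint
  have halt := countP_alternating (fun v => decide (v ∈ U)) Q (hQ.isChain.imp (by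
    rintro u v ⟨-, ⟨hu, hv⟩ | ⟨hu, hv⟩⟩
    · have : v ∉ U := fun h => hUWd h hv
      simp [hu, this]
    · have : u ∉ U := fun h => hUWd h hu
      simp [hv, this]))
  have hsub : ∀ v, v ∈ U ∨ v ∈ W ↔ (v ∈ S ∨ v ∈ T) ∨ v ∈ Q := fun v => by
    have := Finset.ext_iff.1 hQ.union_eq v
    simp only [mem_union, List.mem_toFinset] at this
    exact this.symm
  have hU : #U = #(U ∩ S) + #(U ∩ T) + Q.countP (fun v => decide (v ∈ U)) := by
    rw [List.countP_eq_length_filter, ← List.toFinset_card_of_nodup (hQ.nodup.filter _),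
      ← card_union_of_disjoint, ← card_union_of_disjoint]
    · congr 1
      ext v
      have := hsub v
      simp
      tauto
    · rw [Finset.disjoint_left]
      intro v hv hvQ
      have h1 := hQ.disjoint_left v
      have h2 := hQ.disjoint_right v
      simp at hv hvQ
      tauto
    · exact hQ.disjoint.mono inter_subset_right inter_subset_right
  have hW : #W = #(W ∩ S) + #(W ∩ T) + Q.countP (fun v => !decide (v ∈ U)) := by
    rw [List.countP_eq_length_filter, ← List.toFinset_card_of_nodup (hQ.nodup.filter _),
      ← card_union_of_disjoint, ← card_union_of_disjoint]
    · congr 1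
      ext v
      have := hsub v
      have := @hUWd v
      simp
      tauto
    · rw [Finset.disjoint_left]
      intro v hv hvQ
      have h1 := hQ.disjoint_left v
      have h2 := hQ.disjoint_right v
      simp at hv hvQ
      tauto
    · exact hQ.disjoint.mono inter_subset_right inter_subset_right
  have hS : #S = #(U ∩ S) + #(W ∩ S) := by
    rw [← card_union_of_disjoint (hP.disjoint.mono inter_subset_left inter_subset_left)]
    congr 1
    ext v
    have := hsub v
    simp
    tauto
  have hT : #T = #(U ∩ T) + #(W ∩ T) := by
    rw [← card_union_of_disjoint (hP.disjoint.mono inter_subset_left inter_subset_left)]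
    congr 1
    ext v
    have := hsub v
    simp
    tauto
  have hQcount := List.length_eq_countP_add_countP (fun v => decide (v ∈ U)) (l := Q)
  have hnot : Q.countP (fun v => decide ¬(decide (v ∈ U)) = true) =
      Q.countP (fun v => !decide (v ∈ U)) := by
    congr 1; ext v; simp
  rw [hnot] at hQcount
  have hcol : ∀ u v, G.Adj u v → (colourClass G c 0).Adj u v ∨ (colourClass G c 1).Adj u v := by
    intro u v h
    have : c s(u, v) = 0 ∨ c s(u, v) = 1 := by omega
    exact this.imp (fun hc => ⟨h, hc⟩) (fun hc => ⟨h, hc⟩)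
  refine ⟨U, W, S, T, hP.disjoint, hQ.disjoint, by omega, by omega, by omega, ?_, ?_⟩
  · intro u hu v hv h
    rw [mem_inter] at hu hv
    rcases hcol u v h with h | h
    · exact hP.not_adj u hu.1 v hv.1 h
    · exact hQ.not_adj u hu.2 v hv.2 ⟨h, Or.inl ⟨hu.1, hv.1⟩⟩
  · intro u hu v hv h
    rw [mem_inter] at hu hv
    rcases hcol u v h with h | h
    · exact hP.not_adj u hu.1 v hv.1 h
    · exact hQ.not_adj v hv.2 u hu.2 ⟨h.symm, Or.inr ⟨hv.1, hu.1⟩⟩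

theorem exists_labelling_of_disjoint [DecidableEq V] {A B C D : Finset V} (hAB : Disjoint A B)
    (hAC : Disjoint A C) (hAD : Disjoint A D) (hBC : Disjoint B C) (hBD : Disjoint B D)
    (hCD : Disjoint C D) :
    ∃ ℓ : V → Fin 5, (∀ x, ℓ x = 0 ↔ x ∈ A) ∧ (∀ x, ℓ x = 1 ↔ x ∈ B) ∧ (∀ x, ℓ x = 2 ↔ x ∈ C) ∧
      (∀ x, ℓ x = 3 ↔ x ∈ D) := by
  rw [Finset.disjoint_left] at hAB hAC hAD hBC hBD hCD
  refine ⟨fun x =>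
    if x ∈ A then 0 else if x ∈ B then 1 else if x ∈ C then 2 else if x ∈ D then 3 else 4,
    fun x => ?_, fun x => ?_, fun x => ?_, fun x => ?_⟩
  all_goals
    have := @hAB x; have := @hAC x; have := @hAD x
    have := @hBC x; have := @hBD x; have := @hCD x
    dsimp only
    split_ifs <;> simp <;> tauto

/-- A two-colouring of `G` without monochromatic `n`-vertex paths yields a labelling with large
restricted classes that is compatible with every edge of `G`. -/
theorem exists_compatible_labelling [Fintype V] [DecidableEq V] (G : SimpleGraph V)
    (c : Sym2 V → Fin 2) {n M : ℕ} (hM : 2 * n + 2 * M ≤ Fintype.card V + 2)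
    (hno : ∀ k, ∀ l : List V, l.Nodup → l.IsChain (colourClass G c k).Adj → l.length < n) :
    ∃ (ℓ : V → Fin 5) (s t : ℕ), s + t = M ∧
      (∀ a, #{x | ℓ x = a} = classSizes s t (Fintype.card V - 2 * M) a) ∧
      ∀ u v, G.Adj u v → Compatible (ℓ u) (ℓ v) := by
  obtain ⟨U, W, S, T, hUW, hST, h1, h2, hle, hadj1, hadj2⟩ :=
    exists_disjoint_nonadjacent G c hM hno
  obtain ⟨s, t, hs, ht, hst⟩ : ∃ s t, s ≤ #(U ∩ S) ∧ t ≤ #(U ∩ T) ∧ s + t = M :=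
    ⟨min M #(U ∩ S), M - min M #(U ∩ S), by omega, by omega, by omega⟩
  obtain ⟨A, hA, hAs⟩ := exists_subset_card_eq hs
  obtain ⟨B, hB, hBs⟩ := exists_subset_card_eq (h1 ▸ hs)
  obtain ⟨C, hC, hCs⟩ := exists_subset_card_eq ht
  obtain ⟨D, hD, hDs⟩ := exists_subset_card_eq (h2 ▸ ht)
  obtain ⟨ℓ, f0, f1, f2, f3⟩ := exists_labelling_of_disjoint
    (hUW.mono (hA.trans inter_subset_left) (hB.trans inter_subset_left))
    (hST.mono (hA.trans inter_subset_right) (hC.trans inter_subset_right))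
    (hUW.mono (hA.trans inter_subset_left) (hD.trans inter_subset_left))
    (hUW.symm.mono (hB.trans inter_subset_left) (hC.trans inter_subset_left))
    (hST.symm.mono (hB.trans inter_subset_right) (hD.trans inter_subset_right))
    (hUW.mono (hC.trans inter_subset_left) (hD.trans inter_subset_left))
  have c0 : #{x | ℓ x = 0} = s := by rw [← hAs]; congr 1; ext x; simp [f0]
  have c1 : #{x | ℓ x = 1} = s := by rw [← hBs]; congr 1; ext x; simp [f1]
  have c2 : #{x | ℓ x = 2} = t := by rw [← hCs]; congr 1; ext x; simp [f2]
  have c3 : #{x | ℓ x = 3} = t := by rw [← hDs]; congr 1; ext x; simp [f3]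
  have hsum : #(univ : Finset V) = ∑ a : Fin 5, #{x | ℓ x = a} :=
    card_eq_sum_card_fiberwise (fun x _ => mem_univ _)
  rw [Fin.sum_univ_five, c0, c1, c2, c3, card_univ] at hsum
  refine ⟨ℓ, s, t, hst, ?_, ?_⟩
  · intro a
    fin_cases a
    · exact c0
    · exact c1
    · exact c2
    · exact c3
    · change #{x | ℓ x = 4} = Fintype.card V - 2 * M
      omega
  · intro u v h hbad
    rw [f0, f1, f1, f0, f2, f3, f3, f2] at hbad
    rcases hbad with ⟨hu, hv⟩ | ⟨hu, hv⟩ | ⟨hu, hv⟩ | ⟨hu, hv⟩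
    · exact hadj1 u (hA hu) v (hB hv) h
    · exact hadj1 v (hA hv) u (hB hu) h.symm
    · exact hadj2 u (hC hu) v (hD hv) h
    · exact hadj2 v (hC hv) u (hD hu) h.symm

section Counting

open scoped Nat

variable {L : Type*} [Fintype L] [DecidableEq L]

/-- The words on two copies of `Fin H` with prescribed letter frequencies `m` in which matched
positions carry related letters. -/
def words (H : ℕ) (r : L → L → Prop) [DecidableRel r] (m : L → ℕ) :
    Finset (Fin H ⊕ Fin H → L) :=
  {w | (∀ h, r (w (Sum.inl h)) (w (Sum.inr h))) ∧ ∀ a, #{x | w x = a} = m a}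

theorem card_words_mul_prod_pow_le (H : ℕ) (r : L → L → Prop) [DecidableRel r] (m : L → ℕ)
    (y : L → ℝ) (hy : ∀ a, 0 ≤ y a) :
    (#(words H r m) : ℝ) * ∏ a, y a ^ m a ≤
      (∑ p : L × L, if r p.1 p.2 then y p.1 * y p.2 else 0) ^ H := by
  set f : L × L → ℝ := fun p => if r p.1 p.2 then y p.1 * y p.2 else 0 with hf
  have hf0 : ∀ p, 0 ≤ f p := fun p => by
    simp only [hf]; split_ifs
    · exact mul_nonneg (hy _) (hy _)
    · exact le_rfl
  let e : (Fin H ⊕ Fin H → L) → (Fin H → L × L) := fun w h => (w (Sum.inl h), w (Sum.inr h))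
  have he : Function.Injective e := by
    intro w w' hww
    ext x
    rcases x with h | h
    · exact congrArg Prod.fst (congrFun hww h)
    · exact congrArg Prod.snd (congrFun hww h)
  have hprod : ∀ w ∈ words H r m, ∏ h, f (e w h) = ∏ a, y a ^ m a := by
    intro w hw
    simp only [words, mem_filter, mem_univ, true_and] at hw
    calc ∏ h, f (e w h) = ∏ h, (y (w (Sum.inl h)) * y (w (Sum.inr h))) :=
          prod_congr rfl fun h _ => by simp [hf, e, hw.1 h]
      _ = ∏ x, y (w x) := by rw [prod_mul_distrib, Fintype.prod_sum_type]
      _ = ∏ a, y a ^ m a := by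
          rw [← prod_fiberwise univ w]
          refine prod_congr rfl fun a _ => ?_
          rw [prod_congr rfl (g := fun _ => y a) (by simp +contextual), prod_const, hw.2 a]
  calc (#(words H r m) : ℝ) * ∏ a, y a ^ m a = ∑ w ∈ words H r m, ∏ h, f (e w h) := by
        rw [sum_congr rfl hprod, sum_const, nsmul_eq_mul]
    _ = ∑ g ∈ (words H r m).image e, ∏ h, f (g h) := by
        rw [sum_image fun _ _ _ _ h => he h]
    _ ≤ ∑ g : Fin H → L × L, ∏ h, f (g h) :=
        sum_le_univ_sum_of_nonneg fun g => prod_nonneg fun h _ => hf0 _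
    _ = _ := (Fintype.sum_pow f H).symm

/-- The permutations that carry the standard matching to pairs with related labels. -/
def goodPerms (H : ℕ) (r : L → L → Prop) [DecidableRel r] (ℓ : Fin H ⊕ Fin H → L) :
    Finset (Equiv.Perm (Fin H ⊕ Fin H)) :=
  {τ | ∀ h, r (ℓ (τ (Sum.inl h))) (ℓ (τ (Sum.inr h)))}

theorem card_perms_comp_eq_le {α : Type*} [Fintype α] [DecidableEq α] (ℓ w : α → L) :
    #{τ : Equiv.Perm α | ℓ ∘ τ = w} ≤ ∏ a, (#{x | ℓ x = a})! := by
  rcases eq_empty_or_nonempty {τ : Equiv.Perm α | ℓ ∘ τ = w} with h | ⟨τ₀, h₀⟩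
  · rw [h]; simp
  · have hstab : #{g : Equiv.Perm α | ℓ ∘ g = ℓ} = ∏ a, (#{x | ℓ x = a})! := by
      rw [← Fintype.card_subtype, DomMulAct.stabilizer_card]
      exact prod_congr rfl fun a _ => by rw [Fintype.card_subtype]
    rw [← hstab]
    refine card_le_card_of_injOn (fun τ => τ * τ₀⁻¹) ?_ fun _ _ _ _ h => mul_right_cancel h
    intro τ hτ
    simp only [coe_filter, mem_univ, true_and, mem_filter, Set.mem_ofPred_eq] at hτ h₀ ⊢
    ext x
    have h1 := congrFun hτ (τ₀⁻¹ x)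
    have h2 := congrFun h₀ (τ₀⁻¹ x)
    have h3 : τ₀ (τ₀⁻¹ x) = x := τ₀.apply_symm_apply x
    simp only [Function.comp_apply, Equiv.Perm.mul_apply, h3] at h1 h2 ⊢
    rw [h1, h2]

theorem card_goodPerms_le (H : ℕ) (r : L → L → Prop) [DecidableRel r] (m : L → ℕ)
    (ℓ : Fin H ⊕ Fin H → L) (hℓ : ∀ a, #{x | ℓ x = a} = m a) :
    #(goodPerms H r ℓ) ≤ (∏ a, (m a)!) * #(words H r m) := by
  refine card_le_mul_card_image_of_maps_to (f := fun τ : Equiv.Perm _ => ℓ ∘ τ) ?_ _ ?_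
  · intro τ hτ
    simp only [goodPerms, words, mem_filter, mem_univ, true_and, Function.comp_apply] at hτ ⊢
    refine ⟨hτ, fun a => ?_⟩
    rw [← hℓ a]
    exact card_equiv τ (by simp)
  · intro w _
    simp only [← hℓ]
    exact (card_le_card (filter_subset_filter _ (subset_univ _))).trans (card_perms_comp_eq_le ℓ w)

theorem factorial_mul_exp_le (n : ℕ) :
    (n ! : ℝ) * Real.exp n ≤ Real.exp 1 * (n + 1) * (n : ℝ) ^ n := by
  have key : ∀ n : ℕ, ((n + 1)! : ℝ) * Real.exp n ≤ ((n : ℝ) + 1) ^ (n + 2) := by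
    intro n
    induction n with
    | zero => simp
    | succ n ih =>
      have hpos : (0 : ℝ) < n + 1 := by positivity
      have hexp : Real.exp 1 * ((n : ℝ) + 1) ^ (n + 2) ≤ ((n : ℝ) + 2) ^ (n + 2) := by
        have h1 : Real.exp (1 / ((n : ℝ) + 2)) ≤ (n + 2) / (n + 1) := by
          rw [← Real.le_log_iff_exp_le (by positivity)]
          have := Real.one_sub_inv_le_log_of_pos (x := ((n : ℝ) + 2) / (n + 1)) (by positivity)
          refine le_trans (le_of_eq ?_) this
          field_simp
          ring
        have h2 : Real.exp 1 = Real.exp (1 / ((n : ℝ) + 2)) ^ (n + 2) := by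
          rw [← Real.exp_nat_mul]
          congr 1
          push_cast
          field_simp
        rw [h2, ← mul_pow]
        refine pow_le_pow_left₀ (by positivity) ?_ _
        rwa [le_div_iff₀ hpos] at h1
      rw [Nat.factorial_succ]
      push_cast
      rw [Real.exp_add]
      calc ((n : ℝ) + 1 + 1) * ((n + 1)! : ℝ) * (Real.exp n * Real.exp 1)
          = ((n : ℝ) + 2) * Real.exp 1 * (((n + 1)! : ℝ) * Real.exp n) := by ring
        _ ≤ ((n : ℝ) + 2) * Real.exp 1 * ((n : ℝ) + 1) ^ (n + 2) := by gcongr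
        _ = ((n : ℝ) + 2) * (Real.exp 1 * ((n : ℝ) + 1) ^ (n + 2)) := by ring
        _ ≤ ((n : ℝ) + 2) * ((n : ℝ) + 2) ^ (n + 2) := by gcongr
        _ = ((n : ℝ) + 1 + 1) ^ (n + 1 + 2) := by ring
  cases n with
  | zero => simp
  | succ n =>
    have h := key n
    push_cast
    rw [Real.exp_add]
    calc ((n + 1)! : ℝ) * (Real.exp n * Real.exp 1)
        = Real.exp 1 * (((n + 1)! : ℝ) * Real.exp n) := by ring
      _ ≤ Real.exp 1 * ((n : ℝ) + 1) ^ (n + 2) := by gcongr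
      _ = Real.exp 1 * (((n : ℝ) + 1) * ((n : ℝ) + 1) ^ (n + 1)) := by ring
      _ ≤ Real.exp 1 * ((n : ℝ) + 1 + 1) * ((n : ℝ) + 1) ^ (n + 1) := by
        rw [mul_assoc]; gcongr; linarith

theorem pow_self_le_factorial_mul_exp (n : ℕ) : (n : ℝ) ^ n ≤ n ! * Real.exp n := by
  have := Real.pow_div_factorial_le_exp (x := (n : ℝ)) (by positivity) n
  rwa [div_le_iff₀ (by positivity), mul_comm] at this

/-- A bound on the fraction of good permutations, up to a polynomial factor. The weights `z` are
free and may be chosen to optimise the bound. -/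
theorem card_goodPerms_mul_le (H : ℕ) (r : L → L → Prop) [DecidableRel r] (m : L → ℕ)
    (ℓ : Fin H ⊕ Fin H → L) (hℓ : ∀ a, #{x | ℓ x = a} = m a) (z : L → ℝ) (hz : ∀ a, 0 ≤ z a) :
    (#(goodPerms H r ℓ) : ℝ) * (∏ a, z a ^ m a) * ((2 * H : ℕ) : ℝ) ^ (2 * H) ≤
      (Real.exp 1 * (2 * H + 1)) ^ Fintype.card L * (2 * H)! *
        (∑ p : L × L, if r p.1 p.2 then (m p.1 * z p.1) * (m p.2 * z p.2) else 0) ^ H := by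
  have hsum : ∑ a, m a = 2 * H := by
    have : #(univ : Finset (Fin H ⊕ Fin H)) = ∑ a, #{x | ℓ x = a} :=
      card_eq_sum_card_fiberwise (fun x _ => mem_univ _)
    simp only [hℓ, card_univ, Fintype.card_sum, Fintype.card_fin] at this
    omega
  have hle : ∀ a, m a ≤ 2 * H := fun a =>
    hsum ▸ single_le_sum (f := m) (fun _ _ => Nat.zero_le _) (mem_univ a)
  set Q := (∑ p : L × L, if r p.1 p.2 then ((m p.1 : ℝ) * z p.1) * (m p.2 * z p.2) else 0) ^ H
  have hw := card_words_mul_prod_pow_le H r m (fun a => m a * z a)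
    (fun a => mul_nonneg (by positivity) (hz a))
  have hQ0 : 0 ≤ Q := le_trans (mul_nonneg (by positivity)
    (prod_nonneg fun a _ => pow_nonneg (mul_nonneg (by positivity) (hz a)) _)) hw
  have hg : (#(goodPerms H r ℓ) : ℝ) ≤ (∏ a, ((m a)! : ℝ)) * #(words H r m) := by
    exact_mod_cast card_goodPerms_le H r m ℓ hℓ
  have hexp : Real.exp ((2 * H : ℕ) : ℝ) = ∏ a, Real.exp (m a) := by
    rw [← Real.exp_sum, ← hsum]; push_cast; rfl
  have hfac : (∏ a, ((m a)! : ℝ)) * Real.exp ((2 * H : ℕ) : ℝ) ≤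
      (Real.exp 1 * (2 * H + 1)) ^ Fintype.card L * ∏ a, (m a : ℝ) ^ m a := by
    rw [hexp, ← prod_mul_distrib, ← card_univ, ← prod_const, ← prod_mul_distrib]
    refine prod_le_prod (fun a _ => by positivity) fun a _ => ?_
    refine (factorial_mul_exp_le (m a)).trans ?_
    have : (m a : ℝ) ≤ 2 * H := by exact_mod_cast hle a
    gcongr
  have hz0 : 0 ≤ ∏ a, z a ^ m a := prod_nonneg fun a _ => pow_nonneg (hz a) _
  calc (#(goodPerms H r ℓ) : ℝ) * (∏ a, z a ^ m a) * ((2 * H : ℕ) : ℝ) ^ (2 * H)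
      ≤ ((∏ a, ((m a)! : ℝ)) * #(words H r m)) * (∏ a, z a ^ m a) *
        ((2 * H)! * Real.exp ((2 * H : ℕ) : ℝ)) := by
        gcongr
        exact pow_self_le_factorial_mul_exp _
    _ = ((∏ a, ((m a)! : ℝ)) * Real.exp ((2 * H : ℕ) : ℝ)) *
        (#(words H r m) * (∏ a, z a ^ m a) * (2 * H)!) := by ring
    _ ≤ ((Real.exp 1 * (2 * H + 1)) ^ Fintype.card L * ∏ a, (m a : ℝ) ^ m a) *
        (#(words H r m) * (∏ a, z a ^ m a) * (2 * H)!) := by gcongr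
    _ = (Real.exp 1 * (2 * H + 1)) ^ Fintype.card L * (2 * H)! *
        (#(words H r m) * ∏ a, (m a * z a) ^ m a) := by
        simp only [mul_pow, prod_mul_distrib]; ring
    _ ≤ _ := by gcongr

end Counting

section Estimates

open scoped Nat

theorem sum_compatible_weights (s t r : ℕ) :
    (∑ p : Fin 5 × Fin 5, if Compatible p.1 p.2 then
      ((classSizes s t r p.1 : ℝ) * ![6 / 5, 6 / 5, 6 / 5, 6 / 5, 1] p.1) *
        ((classSizes s t r p.2 : ℝ) * ![6 / 5, 6 / 5, 6 / 5, 6 / 5, 1] p.2) else 0) =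
      (12 / 5 * ((s : ℝ) + t) + r) ^ 2 - 72 / 25 * ((s : ℝ) ^ 2 + t ^ 2) := by
  rw [Fintype.sum_prod_type]
  simp only [Fin.sum_univ_five]
  simp [Compatible, classSizes]
  ring

theorem card_goodPerms_compatible_le {H M s t : ℕ} (hst : s + t = M) (hMH : 2 * M ≤ 2 * H)
    (hH : 0 < H)
    (hQ : (2 * H + 2 / 5 * M : ℝ) ^ 2 - 36 / 25 * M ^ 2 ≤ 112497 / 100000 * (2 * H) ^ 2)
    (ℓ : Fin H ⊕ Fin H → Fin 5)
    (hℓ : ∀ a, #{x | ℓ x = a} = classSizes s t (2 * H - 2 * M) a) :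
    (#(goodPerms H Compatible ℓ) : ℝ) ≤ (Real.exp 1 * (2 * H + 1)) ^ 5 *
      (112497 / 100000) ^ H / (6 / 5) ^ (2 * M) * (2 * H)! := by
  have h := card_goodPerms_mul_le H Compatible _ ℓ hℓ ![6 / 5, 6 / 5, 6 / 5, 6 / 5, 1]
    (by intro a; fin_cases a <;> norm_num)
  rw [sum_compatible_weights] at h
  have hprod : ∏ a, (![6 / 5, 6 / 5, 6 / 5, 6 / 5, 1] a : ℝ) ^
      classSizes s t (2 * H - 2 * M) a = (6 / 5) ^ (2 * M) := by
    rw [Fin.prod_univ_five, ← hst]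
    simp [classSizes]
    ring
  have hsum : (12 / 5 * ((s : ℝ) + t) + (2 * H - 2 * M : ℕ)) ^ 2 -
      72 / 25 * ((s : ℝ) ^ 2 + t ^ 2) ≤ 112497 / 100000 * (2 * H) ^ 2 := by
    refine le_trans ?_ hQ
    rw [Nat.cast_sub hMH, ← hst]
    push_cast
    nlinarith [sq_nonneg ((s : ℝ) - t)]
  have hsum0 : 0 ≤ (12 / 5 * ((s : ℝ) + t) + (2 * H - 2 * M : ℕ)) ^ 2 -
      72 / 25 * ((s : ℝ) ^ 2 + t ^ 2) := by
    have hs : (0 : ℝ) ≤ s := by positivity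
    have ht : (0 : ℝ) ≤ t := by positivity
    have hr : (0 : ℝ) ≤ (2 * H - 2 * M : ℕ) := by positivity
    nlinarith [mul_nonneg hs ht, mul_nonneg hs hr, mul_nonneg ht hr]
  rw [hprod, Fintype.card_fin] at h
  have hN : (0 : ℝ) < ((2 * H : ℕ) : ℝ) ^ (2 * H) := by positivity
  rw [div_mul_eq_mul_div, le_div_iff₀ (by positivity)]
  refine le_of_mul_le_mul_right (h.trans ?_) hN
  calc _ ≤ (Real.exp 1 * (2 * H + 1)) ^ 5 * (2 * H)! *
        (112497 / 100000 * (2 * H : ℝ) ^ 2) ^ H := by gcongr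
    _ = _ := by push_cast; rw [mul_pow (112497 / 100000 : ℝ), ← pow_mul]; ring

theorem card_words_classSizes_le {H M s t : ℕ} (hst : s + t = M) :
    (#(words H (fun _ _ : Fin 5 => True) (classSizes s t (2 * H - 2 * M))) : ℝ) ≤
      1 / ((47 / 296) ^ (2 * M) * (54 / 148) ^ (2 * H - 2 * M)) := by
  have h := card_words_mul_prod_pow_le H (fun _ _ : Fin 5 => True)
    (classSizes s t (2 * H - 2 * M)) ![47 / 296, 47 / 296, 47 / 296, 47 / 296, 54 / 148]
    (by intro a; fin_cases a <;> norm_num)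
  have hsum : (∑ p : Fin 5 × Fin 5, if True then
      (![47 / 296, 47 / 296, 47 / 296, 47 / 296, 54 / 148] p.1 : ℝ) *
        ![47 / 296, 47 / 296, 47 / 296, 47 / 296, 54 / 148] p.2 else 0) = 1 := by
    rw [Fintype.sum_prod_type]
    simp only [Fin.sum_univ_five]
    simp
    norm_num
  have hprod : ∏ a, (![47 / 296, 47 / 296, 47 / 296, 47 / 296, 54 / 148] a : ℝ) ^
      classSizes s t (2 * H - 2 * M) a =
        (47 / 296) ^ (2 * M) * (54 / 148) ^ (2 * H - 2 * M) := by
    rw [Fin.prod_univ_five, ← hst]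
    simp [classSizes]
    ring
  rw [hsum, hprod, one_pow] at h
  rwa [le_div_iff₀ (by positivity)]

/-- The union bound: some family of matchings is compatible with no labelling that has the
prescribed class sizes. -/
theorem exists_matchings {H M : ℕ} (hMH : 2 * M ≤ 2 * H) (hH : 0 < H)
    (hQ : (2 * H + 2 / 5 * M : ℝ) ^ 2 - 36 / 25 * M ^ 2 ≤ 112497 / 100000 * (2 * H) ^ 2)
    (hlt : (M + 1 : ℝ) * (1 / ((47 / 296) ^ (2 * M) * (54 / 148) ^ (2 * H - 2 * M))) *
      ((Real.exp 1 * (2 * H + 1)) ^ 5 * (112497 / 100000) ^ H / (6 / 5) ^ (2 * M)) ^ 27 < 1) :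
    ∃ τ : Fin 27 → Equiv.Perm (Fin H ⊕ Fin H), ∀ (ℓ : Fin H ⊕ Fin H → Fin 5) (s t : ℕ),
      s + t = M → (∀ a, #{x | ℓ x = a} = classSizes s t (2 * H - 2 * M) a) →
        ∃ i h, ¬ Compatible (ℓ (τ i (Sum.inl h))) (ℓ (τ i (Sum.inr h))) := by
  by_contra! hno
  set K : ℝ := (Real.exp 1 * (2 * H + 1)) ^ 5 * (112497 / 100000) ^ H / (6 / 5) ^ (2 * M)
  set D : ℝ := 1 / ((47 / 296) ^ (2 * M) * (54 / 148) ^ (2 * H - 2 * M))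
  let B : ℕ → Finset (Fin H ⊕ Fin H → Fin 5) := fun s =>
    words H (fun _ _ => True) (classSizes s (M - s) (2 * H - 2 * M))
  have hcover : (univ : Finset (Fin 27 → Equiv.Perm (Fin H ⊕ Fin H))) ⊆
      (range (M + 1)).biUnion fun s => (B s).biUnion fun ℓ =>
        Fintype.piFinset fun _ => goodPerms H Compatible ℓ := by
    intro τ _
    obtain ⟨ℓ, s, t, hst, hℓ, hτ⟩ := hno τ
    simp only [mem_biUnion, mem_range, Fintype.mem_piFinset]
    refine ⟨s, by omega, ℓ, ?_, fun i => ?_⟩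
    · obtain rfl : t = M - s := by omega
      simpa [B, words] using hℓ
    · simpa [goodPerms] using hτ i
  have hcard : (((2 * H)! : ℕ) : ℝ) ^ 27 ≤
      ∑ s ∈ range (M + 1), ∑ ℓ ∈ B s, (#(goodPerms H Compatible ℓ) : ℝ) ^ 27 := by
    have h1 := (card_le_card hcover).trans card_biUnion_le
    have h2 := h1.trans (sum_le_sum fun s _ => card_biUnion_le)
    simp only [card_univ, Fintype.card_fun, Fintype.card_perm, Fintype.card_sum,
      Fintype.card_fin, Fintype.card_piFinset_const, ← two_mul] at h2
    exact_mod_cast h2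
  have hbound : ∑ s ∈ range (M + 1), ∑ ℓ ∈ B s, (#(goodPerms H Compatible ℓ) : ℝ) ^ 27 ≤
      ∑ s ∈ range (M + 1), D * (K * (2 * H)!) ^ 27 := by
    refine sum_le_sum fun s hs => ?_
    have hst : s + (M - s) = M := by have := mem_range.1 hs; omega
    calc _ ≤ ∑ ℓ ∈ B s, (K * (2 * H)!) ^ 27 := by
          refine sum_le_sum fun ℓ hℓ => ?_
          have hℓ' : ∀ a, #{x | ℓ x = a} = classSizes s (M - s) (2 * H - 2 * M) a := by
            simpa [B, words] using hℓ
          gcongr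
          exact card_goodPerms_compatible_le hst hMH hH hQ ℓ hℓ'
      _ = #(B s) * (K * (2 * H)!) ^ 27 := by rw [sum_const, nsmul_eq_mul]
      _ ≤ _ := by
          gcongr
          exact card_words_classSizes_le hst
  rw [sum_const, card_range, nsmul_eq_mul] at hbound
  have hpos : (0 : ℝ) < (((2 * H)! : ℕ) : ℝ) ^ 27 := by positivity
  refine lt_irrefl _ (hcard.trans_lt (hbound.trans_lt ?_))
  rw [mul_pow, Nat.cast_succ, ← mul_assoc, ← mul_assoc]
  exact mul_lt_of_lt_one_left hpos hlt

theorem union_bound_eq {q a b d : ℝ} (ha : 0 < a) (hb : 0 < b) (hd : 0 < d) (E : ℝ) {m j : ℕ}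
    (hm : m + 50 = 94 * j) :
    E * (1 / (b ^ m * d ^ (54 * j + 50))) * (E ^ 5 * q ^ (74 * j) / a ^ m) ^ 27 =
      (b * a ^ 27) ^ 50 / d ^ 50 * E ^ 136 * ((q ^ 27) ^ 74 / ((b * a ^ 27) ^ 94 * d ^ 54)) ^ j := by
  have hx : ((b * a ^ 27) ^ 94) ^ j = (b * a ^ 27) ^ m * (b * a ^ 27) ^ 50 := by
    rw [← pow_mul, ← pow_add, hm]
  have hx' : (b * a ^ 27) ^ m = b ^ m * (a ^ m) ^ 27 := by
    rw [mul_pow, ← pow_mul, ← pow_mul, mul_comm 27]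
  have hq : ((q ^ 27) ^ 74) ^ j = (q ^ (74 * j)) ^ 27 := by
    rw [← pow_mul, ← pow_mul, ← pow_mul]; congr 1; ring
  have hc : (b * a ^ 27) ^ 50 ≠ 0 := by positivity
  rw [div_pow ((q ^ 27) ^ 74), mul_pow ((b * a ^ 27) ^ 94), hx, hx', hq, div_pow, pow_add,
    ← pow_mul d, mul_pow (E ^ 5)]
  generalize (b * a ^ 27) ^ 50 = c at hc
  generalize q ^ (74 * j) = u
  have hb' : b ^ m ≠ 0 := by positivity
  have ha' : a ^ m ≠ 0 := by positivity
  have hd' : d ^ (54 * j) ≠ 0 := by positivity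
  have hd2 : d ^ 50 ≠ 0 := by positivity
  generalize b ^ m = b' at hb'
  generalize a ^ m = a' at ha'
  generalize d ^ (54 * j) = d' at hd'
  generalize d ^ 50 = d₂ at hd2
  field_simp

theorem decay_rate_lt_one : ((112497 / 100000 : ℝ) ^ 27) ^ 74 /
    ((47 / 296 * (6 / 5) ^ 27) ^ 94 * (54 / 148) ^ 54) < 1 := by
  rw [div_lt_one (by positivity)]
  norm_num

theorem eventually_union_bound_lt_one : ∀ᶠ j : ℕ in Filter.atTop,
    (((47 * j - 25 : ℕ) : ℝ) + 1) * (1 / ((47 / 296) ^ (2 * (47 * j - 25)) *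
      (54 / 148) ^ (2 * (74 * j) - 2 * (47 * j - 25)))) *
      ((Real.exp 1 * (2 * (74 * j : ℕ) + 1)) ^ 5 * (112497 / 100000) ^ (74 * j) /
        (6 / 5) ^ (2 * (47 * j - 25))) ^ 27 < 1 := by
  obtain ⟨θ, hθ⟩ : ∃ θ : ℝ, θ = ((112497 / 100000 : ℝ) ^ 27) ^ 74 /
    ((47 / 296 * (6 / 5) ^ 27) ^ 94 * (54 / 148) ^ 54) := ⟨_, rfl⟩
  obtain ⟨C, hC⟩ : ∃ C : ℝ, C = (47 / 296 * (6 / 5) ^ 27) ^ 50 / (54 / 148) ^ 50 := ⟨_, rfl⟩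
  have hlim := (tendsto_pow_const_mul_const_pow_of_lt_one 136 (r := θ)
    (by rw [hθ]; positivity) (hθ ▸ decay_rate_lt_one)).const_mul (C * (Real.exp 1 * 149) ^ 136)
  rw [mul_zero] at hlim
  filter_upwards [hlim.eventually (gt_mem_nhds one_pos), Filter.eventually_ge_atTop 1]
    with j hj hj1
  refine lt_of_le_of_lt ?_ hj
  clear hj hlim
  have e1 : 2 * (74 * j) - 2 * (47 * j - 25) = 54 * j + 50 := by omega
  have e2 : 2 * (47 * j - 25) + 50 = 94 * j := by omega
  have hj1' : (1 : ℝ) ≤ j := by exact_mod_cast hj1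
  have hexp : (1 : ℝ) ≤ Real.exp 1 := Real.one_le_exp zero_le_one
  have hM : ((47 * j - 25 : ℕ) : ℝ) + 1 ≤ Real.exp 1 * 149 * j := by
    have h : ((47 * j - 25 : ℕ) : ℝ) + 1 ≤ 149 * j := by
      have : 47 * j - 25 + 1 ≤ 149 * j := by omega
      exact_mod_cast this
    nlinarith
  have hN : Real.exp 1 * (2 * (74 * j : ℕ) + 1) ≤ Real.exp 1 * 149 * j := by
    push_cast
    nlinarith
  rw [e1]
  generalize 2 * (47 * j - 25) = m at e2 ⊢
  have hpow : (Real.exp 1 * 149 * j) ^ 136 = (Real.exp 1 * 149) ^ 136 * (j : ℝ) ^ 136 :=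
    mul_pow _ _ _
  have hE : 0 ≤ Real.exp 1 * 149 * j := by positivity
  generalize Real.exp 1 * 149 * j = E at *
  calc _ ≤ E * (1 / ((47 / 296) ^ m * (54 / 148) ^ (54 * j + 50))) *
        (E ^ 5 * (112497 / 100000) ^ (74 * j) / (6 / 5) ^ m) ^ 27 := by gcongr
    _ = C * E ^ 136 * θ ^ j := by
        rw [hC, hθ]
        exact union_bound_eq (by norm_num) (by norm_num) (by norm_num) E e2
    _ = C * (Real.exp 1 * 149) ^ 136 * (j ^ 136 * θ ^ j) := by
        rw [hpow, mul_assoc, mul_assoc, mul_assoc]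

end Estimates

section Construction

theorem sizeRamsey_le_ncard_edgeSet [Fintype V] {W : Type*} {F : SimpleGraph W} {r : ℕ}
    {G : SimpleGraph V} (h : Arrows G F r) : sizeRamsey F r ≤ G.edgeSet.ncard := by
  let e := Fintype.equivFin V
  refine Nat.sInf_le ⟨Fintype.card V, G.map e.toEmbedding, ?_, fun c => ?_⟩
  · exact (Nat.card_congr (SimpleGraph.Iso.map e G).mapEdgeSet).symm
  · obtain ⟨k, f, hf, hadj⟩ := h fun x => c (x.map e)
    refine ⟨k, e ∘ f, e.injective.comp hf, fun a b hab => ?_⟩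
    obtain ⟨h1, h2⟩ := hadj a b hab
    exact ⟨(SimpleGraph.Iso.map e G).map_adj_iff.2 h1, by simpa using h2⟩

theorem arrows_pathGraph_of_exists_chain {G : SimpleGraph V} {n : ℕ}
    (h : ∀ c : Sym2 V → Fin 2, ∃ (k : Fin 2) (l : List V), l.Nodup ∧
      l.IsChain (colourClass G c k).Adj ∧ n ≤ l.length) : Arrows G (pathGraph n) 2 := by
  intro c
  obtain ⟨k, l, hnodup, hchain, hlen⟩ := h c
  have hstep : ∀ i (hi : i + 1 < l.length), (colourClass G c k).Adj l[i] l[i + 1] :=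
    fun i hi => List.isChain_iff_getElem.1 hchain i hi
  refine ⟨k, fun i => l[i.val], fun i j hij => ?_, fun a b hab => ?_⟩
  · exact Fin.ext ((hnodup.getElem_inj_iff).1 hij)
  · change (colourClass G c k).Adj l[a.val] l[b.val]
    rcases pathGraph_adj.1 hab with hab | hab
    · simpa only [hab] using hstep a.val (by omega)
    · simpa only [hab] using (hstep b.val (by omega)).symm

/-- The union of the images of the standard perfect matching under the permutations `τ i`. -/
def matchingGraph {H d : ℕ} (τ : Fin d → Equiv.Perm (Fin H ⊕ Fin H)) :
    SimpleGraph (Fin H ⊕ Fin H) :=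
  SimpleGraph.fromEdgeSet
    (Set.range fun p : Fin d × Fin H => s(τ p.1 (Sum.inl p.2), τ p.1 (Sum.inr p.2)))

theorem ncard_edgeSet_matchingGraph_le {H d : ℕ} (τ : Fin d → Equiv.Perm (Fin H ⊕ Fin H)) :
    (matchingGraph τ).edgeSet.ncard ≤ d * H := by
  rw [matchingGraph, SimpleGraph.edgeSet_fromEdgeSet]
  refine (Set.ncard_le_ncard Set.sdiff_subset (Set.finite_range _)).trans ?_
  rw [← Set.image_univ]
  refine (Set.ncard_image_le Set.finite_univ).trans ?_
  simp [Set.ncard_univ]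

theorem matchingGraph_adj {H d : ℕ} (τ : Fin d → Equiv.Perm (Fin H ⊕ Fin H)) (i : Fin d)
    (h : Fin H) : (matchingGraph τ).Adj (τ i (Sum.inl h)) (τ i (Sum.inr h)) := by
  rw [matchingGraph, SimpleGraph.fromEdgeSet_adj]
  exact ⟨⟨(i, h), rfl⟩, by simp⟩

theorem arrows_matchingGraph {H M n d : ℕ} (τ : Fin d → Equiv.Perm (Fin H ⊕ Fin H))
    (hM : 2 * n + 2 * M ≤ 2 * H + 2)
    (hτ : ∀ (ℓ : Fin H ⊕ Fin H → Fin 5) (s t : ℕ), s + t = M →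
      (∀ a, #{x | ℓ x = a} = classSizes s t (2 * H - 2 * M) a) →
        ∃ i h, ¬ Compatible (ℓ (τ i (Sum.inl h))) (ℓ (τ i (Sum.inr h)))) :
    Arrows (matchingGraph τ) (pathGraph n) 2 := by
  refine arrows_pathGraph_of_exists_chain fun c => ?_
  by_contra! hno
  have hcard : Fintype.card (Fin H ⊕ Fin H) = 2 * H := by
    rw [Fintype.card_sum, Fintype.card_fin, two_mul]
  obtain ⟨ℓ, s, t, hst, hℓ, hcompat⟩ :=
    exists_compatible_labelling (matchingGraph τ) c (n := n) (M := M) (by omega) hno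
  rw [hcard] at hℓ
  obtain ⟨i, h, hih⟩ := hτ ℓ s t hst hℓ
  exact hih (hcompat _ _ (matchingGraph_adj τ i h))

end Construction

end SizeRamseyPath

open SizeRamseyPath

/-- For all sufficiently large `n`, `R̂(Pₙ, 2) ≤ 74 n`. -/
theorem sizeRamsey_path_two_upper :
    ∃ N : ℕ, ∀ n : ℕ, N ≤ n → sizeRamsey (pathGraph n) 2 ≤ 74 * n := by
  obtain ⟨j₀, hj₀⟩ := Filter.eventually_atTop.1 eventually_union_bound_lt_one
  refine ⟨27 * (j₀ + 1000), fun n hn => ?_⟩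
  obtain ⟨j, hj⟩ : ∃ j, j = n / 27 := ⟨_, rfl⟩
  have hj1 : j₀ + 1000 ≤ j := by omega
  have hQ : (2 * (74 * j : ℕ) + 2 / 5 * (47 * j - 25 : ℕ) : ℝ) ^ 2 -
      36 / 25 * (47 * j - 25 : ℕ) ^ 2 ≤ 112497 / 100000 * (2 * (74 * j : ℕ)) ^ 2 := by
    have hj' : (1000 : ℝ) ≤ j := by exact_mod_cast (show 1000 ≤ j by omega)
    rw [Nat.cast_sub (by omega)]
    push_cast
    nlinarith only [hj']
  obtain ⟨τ, hτ⟩ := exists_matchings (by omega) (by omega) hQ (hj₀ j (by omega))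
  calc sizeRamsey (pathGraph n) 2 ≤ (matchingGraph τ).edgeSet.ncard :=
        sizeRamsey_le_ncard_edgeSet (arrows_matchingGraph τ (by omega) hτ)
    _ ≤ 27 * (74 * j) := ncard_edgeSet_matchingGraph_le τ
    _ ≤ 74 * n := by omega
end
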